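/- arXiv:2304.11737 — 10 statements merged into one kernel-verified Lean document; each statement's English description precedes it below -/
import Mathlib

section
/- Let d ≥ 1 be a real number, c ≥ 0, K ≥ 1 an integer, and set k₀ = ⌈K/2⌉. Define step sizes η_k for 0 ≤ k < K by: if K ≤ d then η_k = 1/d for all k; if K > d then η_k = 1/d for k < k₀ and η_k = 2/(2d + k − k₀) for k₀ ≤ k < K. There is an absolute constant C > 0 (independent of d, c, K and the sequence) such that every sequence of nonnegative reals r₀, r₁, …, r_K satisfying r_{k+1} ≤ (1 − η_k)·r_k + c·η_k² for all 0 ≤ k < K obeys r_K ≤ C·( d·r₀·exp(−K/(2d)) + c/K ). -/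
/-!
While the step size is the constant `1/d`, the excess of `r` over the fixed point `c/d` contracts
by `1 - 1/d ≤ exp (-1/d)` per step, and at least `K/2` such steps are made.

For the step size `2/x`, with `x` growing by one per step, the weight `(x - 1) * (x - 2)` absorbs
the contraction exactly, as `x * (x - 1) * (1 - 2/x) = (x - 1) * (x - 2)`. The weighted sequence
thus gains at most `4 * c` per step, and dividing by the final weight, of order `(d + K) ^ 2`, turns
both the `c/d` left over from the constant steps and this linear growth into `O(c/K)`.
-/

section ConstantStep

variable {s c t : ℝ} {r : ℕ → ℝ} {m : ℕ}

theorem le_pow_mul_add_of_constant_step (hs : s ≤ 1)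
    (hrec : ∀ k < m, r (k + 1) ≤ (1 - s) * r k + c * s ^ 2) :
    r m ≤ (1 - s) ^ m * (r 0 - c * s) + c * s := by
  have hgeom : r m - c * s ≤ (1 - s) ^ m * (r 0 - c * s) :=
    le_geom (u := fun k => r k - c * s) (sub_nonneg.2 hs) m fun k hk => by
      linear_combination hrec k hk
  linarith

theorem le_exp_mul_add_of_constant_step (hs₀ : 0 ≤ s) (hs₁ : s ≤ 1) (hc : 0 ≤ c) (hr₀ : 0 ≤ r 0)
    (ht : t ≤ m * s) (hrec : ∀ k < m, r (k + 1) ≤ (1 - s) * r k + c * s ^ 2) :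
    r m ≤ Real.exp (-t) * r 0 + c * s := by
  have hcontr : (1 - s) ^ m ≤ Real.exp (-t) := calc
    (1 - s) ^ m ≤ Real.exp (-s) ^ m :=
      pow_le_pow_left₀ (sub_nonneg.2 hs₁) (Real.one_sub_le_exp_neg s) m
    _ = Real.exp (-(m * s)) := by rw [← Real.exp_nat_mul, mul_neg]
    _ ≤ Real.exp (-t) := Real.exp_le_exp.2 (neg_le_neg ht)
  calc
    r m ≤ (1 - s) ^ m * (r 0 - c * s) + c * s := le_pow_mul_add_of_constant_step hs₁ hrec
    _ ≤ (1 - s) ^ m * r 0 + c * s := by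
      gcongr
      exact sub_le_self _ (mul_nonneg hc hs₀)
    _ ≤ Real.exp (-t) * r 0 + c * s := by gcongr

end ConstantStep

section DecayingStep

variable {𝕜 : Type*} [Field 𝕜] [LinearOrder 𝕜] [IsStrictOrderedRing 𝕜]
  {a b c : 𝕜} {r : ℕ → 𝕜} {m : ℕ}

theorem mul_mul_le_add_of_decaying_step (ha : 1 ≤ a) (hc : 0 ≤ c)
    (hrec : ∀ j < m, r (j + 1) ≤ (1 - 2 / (a + j)) * r j + c * (2 / (a + j)) ^ 2) :
    (a + m - 1) * (a + m - 2) * r m ≤ (a - 1) * (a - 2) * r 0 + 4 * c * m := by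
  induction m with
  | zero => simp
  | succ j ih =>
    obtain ⟨x, hx⟩ : ∃ x, x = a + (j : 𝕜) := ⟨_, rfl⟩
    have hx₁ : 1 ≤ x := hx ▸ le_add_of_le_of_nonneg ha j.cast_nonneg
    have hx₀ : 0 < x := one_pos.trans_le hx₁
    have hnoise : (x - 1) / x ≤ 1 := (div_le_one hx₀).2 (sub_le_self x zero_le_one)
    have ih := ih fun i hi => hrec i (hi.trans j.lt_succ_self)
    have hstep := hrec j j.lt_succ_self
    rw [← hx] at ih hstep
    calc
      (a + (j + 1 : ℕ) - 1) * (a + (j + 1 : ℕ) - 2) * r (j + 1)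
      _ = x * (x - 1) * r (j + 1) := by rw [hx]; push_cast; ring
      _ ≤ x * (x - 1) * ((1 - 2 / x) * r j + c * (2 / x) ^ 2) :=
        mul_le_mul_of_nonneg_left hstep (mul_nonneg hx₀.le (sub_nonneg.2 hx₁))
      _ = (x - 1) * (x - 2) * r j + 4 * c * ((x - 1) / x) := by field_simp; ring
      _ ≤ ((a - 1) * (a - 2) * r 0 + 4 * c * j) + 4 * c * 1 := by gcongr
      _ = (a - 1) * (a - 2) * r 0 + 4 * c * (j + 1 : ℕ) := by push_cast; ring

theorem le_add_div_of_decaying_step (ha : 2 ≤ a) (hb : 0 ≤ b) (hc : 0 ≤ c) (hm : 0 < m)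
    (hr₀ : r 0 ≤ b + 2 * c / a)
    (hrec : ∀ j < m, r (j + 1) ≤ (1 - 2 / (a + j)) * r j + c * (2 / (a + j)) ^ 2) :
    r m ≤ b + 4 * c / (a + m - 1) := by
  have ha₀ : 0 < a := two_pos.trans_le ha
  have ha₁ : 0 ≤ a - 1 := by linarith
  have hm₁ : (1 : 𝕜) ≤ m := by exact_mod_cast hm
  have hw₁ : 0 < a + m - 1 := by linarith
  have hw₂ : 0 < a + m - 2 := by linarith
  have hratio : (a - 1) / a ≤ 1 := (div_le_one ha₀).2 (sub_le_self a zero_le_one)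
  refine le_of_mul_le_mul_left ?_ (mul_pos hw₁ hw₂)
  calc
    (a + m - 1) * (a + m - 2) * r m
    _ ≤ (a - 1) * (a - 2) * r 0 + 4 * c * m :=
      mul_mul_le_add_of_decaying_step (one_le_two.trans ha) hc hrec
    _ ≤ (a - 1) * (a - 2) * (b + 2 * c / a) + 4 * c * m := by gcongr
    _ = (a - 1) * (a - 2) * b + (2 * c * (a - 2) * ((a - 1) / a) + 4 * c * m) := by ring
    _ ≤ (a + m - 1) * (a + m - 2) * b + (4 * c * (a - 2) * 1 + 4 * c * m) := by
      gcongr <;> linarith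
    _ = (a + m - 1) * (a + m - 2) * (b + 4 * c / (a + m - 1)) := by field_simp; ring

end DecayingStep

/-- The step sizes of Stich's lemma for a horizon of `K` steps: constant on short horizons, and
otherwise constant up to the midpoint `⌈K/2⌉` and harmonically decaying from there. -/
noncomputable def stichStepSize (d : ℝ) (K k : ℕ) : ℝ :=
  if (K : ℝ) ≤ d then 1 / d
  else if k < ⌈(K : ℝ) / 2⌉₊ then 1 / d
  else 2 / (2 * d + (k : ℝ) - (⌈(K : ℝ) / 2⌉₊ : ℝ))

section StichStepSize

variable {d c : ℝ} {K k : ℕ} {r : ℕ → ℝ}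

theorem stichStepSize_of_le (hKd : K ≤ d) : stichStepSize d K k = 1 / d :=
  if_pos hKd

theorem stichStepSize_of_lt_ceil (hk : k < ⌈(K : ℝ) / 2⌉₊) : stichStepSize d K k = 1 / d := by
  rw [stichStepSize, if_pos hk, ite_self]

theorem stichStepSize_ceil_add (hdK : d < K) (j : ℕ) :
    stichStepSize d K (⌈(K : ℝ) / 2⌉₊ + j) = 2 / (2 * d + j) := by
  rw [stichStepSize, if_neg hdK.not_ge, if_neg (Nat.le_add_right _ j).not_gt]
  push_cast
  ring_nf

theorem le_exp_mul_add_of_stichStepSize_eq {m : ℕ} (hd : 1 ≤ d) (hc : 0 ≤ c) (hr₀ : 0 ≤ r 0)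
    (hm : (K : ℝ) / 2 ≤ m) (hη : ∀ k < m, stichStepSize d K k = 1 / d)
    (hrec : ∀ k < m,
      r (k + 1) ≤ (1 - stichStepSize d K k) * r k + c * stichStepSize d K k ^ 2) :
    r m ≤ Real.exp (-(K : ℝ) / (2 * d)) * r 0 + c / d := by
  have hd₀ : 0 < d := one_pos.trans_le hd
  have ht : (K : ℝ) / (2 * d) ≤ m * (1 / d) := by
    rw [← div_div, mul_one_div]
    gcongr
  rw [neg_div, ← mul_one_div c d]
  exact le_exp_mul_add_of_constant_step (one_div_nonneg.2 hd₀.le) ((div_le_one hd₀).2 hd) hc hr₀ ht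
    fun k hk => hη k hk ▸ hrec k hk

theorem le_exp_mul_add_of_stichStepSize_of_lt (hd : 1 ≤ d) (hc : 0 ≤ c) (hdK : d < K)
    (hr₀ : 0 ≤ r 0)
    (hrec : ∀ k < K,
      r (k + 1) ≤ (1 - stichStepSize d K k) * r k + c * stichStepSize d K k ^ 2) :
    r K ≤ Real.exp (-(K : ℝ) / (2 * d)) * r 0 + 8 * (c / K) := by
  have hK : (2 : ℝ) ≤ K := by exact_mod_cast (Nat.one_lt_cast.1 (hd.trans_lt hdK) : 1 < K)
  have hceil : (⌈(K : ℝ) / 2⌉₊ : ℝ) < K / 2 + 1 := Nat.ceil_lt_add_one (by positivity)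
  have hmid : ⌈(K : ℝ) / 2⌉₊ < K := by
    rw [← Nat.cast_lt (α := ℝ)]
    linarith
  have hfirst := le_exp_mul_add_of_stichStepSize_eq hd hc hr₀ (Nat.le_ceil _)
    (fun _ => stichStepSize_of_lt_ceil) fun k hk => hrec k (hk.trans hmid)
  have hsecond := le_add_div_of_decaying_step (a := 2 * d)
    (b := Real.exp (-(K : ℝ) / (2 * d)) * r 0) (c := c) (m := K - ⌈(K : ℝ) / 2⌉₊)
    (r := fun j => r (⌈(K : ℝ) / 2⌉₊ + j))
    (by linarith) (by positivity) hc (Nat.sub_pos_of_lt hmid)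
    (by rwa [mul_div_mul_left c d two_ne_zero])
    fun j hj => stichStepSize_ceil_add hdK j ▸ hrec _ (Nat.add_lt_of_lt_sub' hj)
  rw [Nat.add_sub_cancel' hmid.le, Nat.cast_sub hmid.le] at hsecond
  calc
    r K ≤ Real.exp (-(K : ℝ) / (2 * d)) * r 0
        + 4 * c / (2 * d + (K - ⌈(K : ℝ) / 2⌉₊) - 1) := hsecond
    _ ≤ Real.exp (-(K : ℝ) / (2 * d)) * r 0 + 4 * c / (K / 2) := by
      gcongr
      linarith
    _ = Real.exp (-(K : ℝ) / (2 * d)) * r 0 + 8 * (c / K) := by ring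

theorem stich_recursion_lemma_general (hd : 1 ≤ d) (hc : 0 ≤ c) (hK : 1 ≤ K) (hr₀ : 0 ≤ r 0)
    (hrec : ∀ k < K,
      r (k + 1) ≤ (1 - stichStepSize d K k) * r k + c * stichStepSize d K k ^ 2) :
    r K ≤ Real.exp (-(K : ℝ) / (2 * d)) * r 0 + 8 * (c / K) := by
  rcases le_or_gt (K : ℝ) d with hKd | hdK
  · have hcd : c / d ≤ c / K := div_le_div_of_nonneg_left hc (Nat.cast_pos.2 hK) hKd
    have hcK : 0 ≤ c / K := div_nonneg hc K.cast_nonneg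
    have hconst := le_exp_mul_add_of_stichStepSize_eq hd hc hr₀ (half_le_self K.cast_nonneg)
      (fun _ _ => stichStepSize_of_le hKd) hrec
    linarith
  · exact le_exp_mul_add_of_stichStepSize_of_lt hd hc hdK hr₀ hrec

end StichStepSize

/-- Stich's step-size/recursion lemma (Lemma A.3 of the paper). -/
theorem stich_recursion_lemma :
    ∃ C : ℝ, 0 < C ∧
      ∀ (d c : ℝ) (K : ℕ) (η r : ℕ → ℝ),
        1 ≤ d → 0 ≤ c → 1 ≤ K →
        (∀ k < K, η k =
          if (K : ℝ) ≤ d then 1 / d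
          else if k < ⌈(K : ℝ) / 2⌉₊ then 1 / d
          else 2 / (2 * d + (k : ℝ) - (⌈(K : ℝ) / 2⌉₊ : ℝ))) →
        (∀ k, 0 ≤ r k) →
        (∀ k < K, r (k + 1) ≤ (1 - η k) * r k + c * η k ^ 2) →
        r K ≤ C * (d * r 0 * Real.exp (-(K : ℝ) / (2 * d)) + c / K) := by
  refine ⟨8, by norm_num, fun d c K η r hd hc hK hη hr hrec => ?_⟩
  have hη' : ∀ k < K, η k = stichStepSize d K k := hη
  have hd₈ : 1 ≤ 8 * d := by linarith
  have hr₀ : 0 ≤ Real.exp (-(K : ℝ) / (2 * d)) * r 0 := mul_nonneg (Real.exp_pos _).le (hr 0)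
  calc
    r K ≤ Real.exp (-(K : ℝ) / (2 * d)) * r 0 + 8 * (c / K) :=
      stich_recursion_lemma_general hd hc hK (hr 0) fun k hk => hη' k hk ▸ hrec k hk
    _ ≤ 8 * d * (Real.exp (-(K : ℝ) / (2 * d)) * r 0) + 8 * (c / K) := by
      gcongr ?_ + _
      exact le_mul_of_one_le_left hr₀ hd₈
    _ = 8 * (d * r 0 * Real.exp (-(K : ℝ) / (2 * d)) + c / K) := by ring
end

section
/- Let X ⊆ ℝ^d be convex, let f : ℝ^d → ℝ be differentiable, L-smooth on X with L > 0, and convex on X (i.e., f(z) ≥ f(y) + ⟨∇f(y), z − y⟩ for all y, z ∈ X). Let x, s, x* ∈ X, g ∈ ℝ^d, η ∈ [0,1], α > 0, and suppose s satisfies ⟨g, s⟩ ≤ ⟨g, z⟩ for all z ∈ X. Then, with x⁺ = x + η(s − x), one has f(x⁺) − f(x*) ≤ (1 − η)·(f(x) − f(x*)) + (α/L)·‖∇f(x) − g‖² + (L·η²/α)·‖s − x*‖² + (L·η²/2)·‖s − x‖². -/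
open scoped RealInnerProductSpace

/-!
By `L`-smoothness, moving from `x` to `x⁺ = x + η (s - x)` changes `f` by at most the linear term
`η ⟨∇f(x), s - x⟩` plus `L η² ‖s - x‖² / 2`. Since `s` minimises the linear functional given by `g`,
replacing the target `s` by `x*` in the linear term costs only the gradient error
`η ‖∇f(x) - g‖ ‖s - x*‖`, which Young's inequality with weight `α / L` splits into two squares.
Convexity bounds the remaining `η ⟨∇f(x), x* - x⟩` by `-η (f(x) - f(x*))`. No inner product is
involved: the argument takes place in a normed space, with gradients read as continuous linear
functionals.
-/

section NormedSpace

variable {E F : Type*} [NormedAddCommGroup E] [NormedSpace ℝ E]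
  [NormedAddCommGroup F] [NormedSpace ℝ F]

theorem norm_image_one_sub_sub_le_of_norm_deriv_sub_le {φ φ' : ℝ → F} {C : ℝ}
    (hφ : ∀ t ∈ Set.Icc (0 : ℝ) 1, HasDerivWithinAt φ (φ' t) (Set.Icc 0 1) t)
    (hC : ∀ t ∈ Set.Ico (0 : ℝ) 1, ‖φ' t - φ' 0‖ ≤ C * t) :
    ‖φ 1 - φ 0 - φ' 0‖ ≤ C / 2 := by
  have hremainder : ∀ t ∈ Set.Icc (0 : ℝ) 1,
      HasDerivWithinAt (fun t => φ t - φ 0 - t • φ' 0) (φ' t - φ' 0) (Set.Icc 0 1) t :=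
    fun t ht => by
      simpa only [id, one_smul] using
        ((hφ t ht).sub_const (φ 0)).fun_sub ((hasDerivWithinAt_id t _).smul_const (φ' 0))
  have hquadratic (t : ℝ) : HasDerivAt (fun t : ℝ => C / 2 * t ^ 2) (C * t) t :=
    ((hasDerivAt_pow 2 t).const_mul (C / 2)).congr_deriv (by push_cast; ring)
  have hfence := image_norm_le_of_norm_deriv_right_le_deriv_boundary
    (fun t ht => (hremainder t ht).continuousWithinAt)
    (fun t ht => (hremainder t (Set.Ico_subset_Icc_self ht)).mono_of_mem_nhdsWithin
      (Icc_mem_nhdsGE_of_mem ht))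
    (by simp) hquadratic hC (Set.right_mem_Icc.mpr zero_le_one)
  simpa only [one_smul, one_pow, mul_one] using hfence

theorem norm_image_sub_sub_le_of_norm_hasFDerivWithinAt_sub_le {X : Set E} (hX : Convex ℝ X)
    {f : E → F} {f' : E → E →L[ℝ] F} {L : ℝ} {x y : E}
    (hf : ∀ z ∈ X, HasFDerivWithinAt f (f' z) X z)
    (hL : ∀ z ∈ X, ‖f' z - f' x‖ ≤ L * ‖z - x‖) (hx : x ∈ X) (hy : y ∈ X) :
    ‖f y - f x - f' x (y - x)‖ ≤ L / 2 * ‖y - x‖ ^ 2 := by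
  set v := y - x with hv
  have hmem : Set.MapsTo (fun t : ℝ => x + t • v) (Set.Icc 0 1) X :=
    fun _ ht => hX.add_smul_sub_mem hx hy ht
  have hline (t : ℝ) : HasDerivAt (fun t : ℝ => x + t • v) v t := by
    simpa only [id, one_smul] using ((hasDerivAt_id t).smul_const v).const_add x
  have hbound : ∀ t ∈ Set.Ico (0 : ℝ) 1,
      ‖f' (x + t • v) v - f' (x + (0 : ℝ) • v) v‖ ≤ L * ‖v‖ ^ 2 * t := fun t ht => calc
    ‖f' (x + t • v) v - f' (x + (0 : ℝ) • v) v‖ = ‖(f' (x + t • v) - f' x) v‖ := by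
      rw [zero_smul, add_zero, sub_apply]
    _ ≤ ‖f' (x + t • v) - f' x‖ * ‖v‖ := (f' (x + t • v) - f' x).le_opNorm v
    _ ≤ L * ‖x + t • v - x‖ * ‖v‖ := by
      gcongr
      exact hL _ (hmem (Set.Ico_subset_Icc_self ht))
    _ = L * ‖v‖ ^ 2 * t := by
      rw [add_sub_cancel_left, norm_smul, Real.norm_of_nonneg ht.1]
      ring
  have hsegment := norm_image_one_sub_sub_le_of_norm_deriv_sub_le
    (fun t ht => (hf _ (hmem ht)).comp_hasDerivWithinAt t (hline t).hasDerivWithinAt hmem) hbound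
  simp only [Function.comp_apply, one_smul, zero_smul, add_zero] at hsegment
  rwa [hv, add_sub_cancel, ← hv, mul_div_right_comm] at hsegment

theorem apply_sub_le_apply_sub_add_norm_mul_norm {φ g : StrongDual ℝ E} {s z : E}
    (hmin : g s ≤ g z) (x : E) :
    φ (s - x) ≤ φ (z - x) + ‖φ - g‖ * ‖s - z‖ := by
  have herror : (φ - g) (s - z) ≤ ‖φ - g‖ * ‖s - z‖ :=
    (le_abs_self _).trans ((φ - g).le_opNorm (s - z))
  simp only [sub_apply, map_sub] at herror ⊢
  linarith

theorem mul_le_div_mul_sq_add_div_mul_sq {K : Type*} [Field K] [LinearOrder K]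
    [IsStrictOrderedRing K] {α L : K} (hα : 0 < α) (hL : 0 < L) (a b : K) :
    a * b ≤ α / L * a ^ 2 + L / α * b ^ 2 := by
  have hyoung : 2 * a * b ≤ α / L * a ^ 2 + (α / L)⁻¹ * b ^ 2 :=
    two_mul_le_add_mul_sq (div_pos hα hL)
  rw [inv_div] at hyoung
  have hnonneg : 0 ≤ α / L * a ^ 2 + L / α * b ^ 2 := by positivity
  linarith

theorem fw_descent_inequality_convex_general {X : Set E} (hX : Convex ℝ X)
    {f : E → ℝ} {f' : E → StrongDual ℝ E} {L : ℝ} (hL : 0 < L) {x s z : E}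
    (hf : ∀ y ∈ X, HasFDerivWithinAt f (f' y) X y)
    (hsmooth : ∀ y ∈ X, ‖f' y - f' x‖ ≤ L * ‖y - x‖)
    (hconv : f x + f' x (z - x) ≤ f z) (hx : x ∈ X) (hs : s ∈ X)
    {g : StrongDual ℝ E} {η α : ℝ} (hη : η ∈ Set.Icc (0 : ℝ) 1) (hα : 0 < α)
    (hmin : g s ≤ g z) :
    f (x + η • (s - x)) - f z ≤
      (1 - η) * (f x - f z) + (α / L) * ‖f' x - g‖ ^ 2
        + (L * η ^ 2 / α) * ‖s - z‖ ^ 2 + (L * η ^ 2 / 2) * ‖s - x‖ ^ 2 := by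
  have hdescent : f (x + η • (s - x)) - f x - η * f' x (s - x) ≤
      L * η ^ 2 / 2 * ‖s - x‖ ^ 2 := by
    have hremainder := (le_abs_self _).trans
      (norm_image_sub_sub_le_of_norm_hasFDerivWithinAt_sub_le hX hf hsmooth hx
        (hX.add_smul_sub_mem hx hs hη))
    rw [add_sub_cancel_left, map_smul, smul_eq_mul, norm_smul, mul_pow, Real.norm_eq_abs,
      sq_abs] at hremainder
    linarith
  have hdirection : f' x (s - x) ≤ f z - f x + ‖f' x - g‖ * ‖s - z‖ := by
    linarith [apply_sub_le_apply_sub_add_norm_mul_norm (φ := f' x) hmin x]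
  have hyoung : ‖f' x - g‖ * (η * ‖s - z‖) ≤
      α / L * ‖f' x - g‖ ^ 2 + L * η ^ 2 / α * ‖s - z‖ ^ 2 :=
    (mul_le_div_mul_sq_add_div_mul_sq hα hL _ _).trans_eq (by ring)
  linarith [mul_le_mul_of_nonneg_left hdirection hη.1]

end NormedSpace

/-- Per-iteration descent inequality of Frank–Wolfe with an inexact gradient
estimate `g` on a convex set `X`, for a convex `L`-smooth function `f`
(proof of Theorem 1 of the paper, before taking expectations). -/
theorem fw_descent_inequality_convex {d : ℕ}
    (X : Set (EuclideanSpace ℝ (Fin d))) (hX : Convex ℝ X)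
    (f : EuclideanSpace ℝ (Fin d) → ℝ) (L : ℝ) (hL : 0 < L)
    (hdiff : Differentiable ℝ f)
    (hsmooth : ∀ x ∈ X, ∀ y ∈ X, ‖gradient f x - gradient f y‖ ≤ L * ‖x - y‖)
    (hconv : ∀ y ∈ X, ∀ z ∈ X, f y + ⟪gradient f y, z - y⟫ ≤ f z)
    (x s xstar : EuclideanSpace ℝ (Fin d))
    (hx : x ∈ X) (hs : s ∈ X) (hxstar : xstar ∈ X)
    (g : EuclideanSpace ℝ (Fin d)) (η α : ℝ)
    (hη : η ∈ Set.Icc (0 : ℝ) 1) (hα : 0 < α)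
    (hmin : ∀ z ∈ X, ⟪g, s⟫ ≤ ⟪g, z⟫) :
    f (x + η • (s - x)) - f xstar ≤
      (1 - η) * (f x - f xstar)
        + (α / L) * ‖gradient f x - g‖ ^ 2
        + (L * η ^ 2 / α) * ‖s - xstar‖ ^ 2
        + (L * η ^ 2 / 2) * ‖s - x‖ ^ 2 := by
  simpa only [← map_sub, LinearIsometryEquiv.norm_map] using
    fw_descent_inequality_convex_general
      (f' := fun y => InnerProductSpace.toDual ℝ _ (gradient f y))
      (g := InnerProductSpace.toDual ℝ _ g) hX hL
      (fun y _ => (hdiff y).hasGradientAt.hasFDerivAt.hasFDerivWithinAt)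
      (fun y hy => by simpa only [← map_sub, LinearIsometryEquiv.norm_map] using hsmooth y hy x hx)
      (hconv x hx xstar hxstar) hx hs hη hα (hmin xstar hxstar)
end

section
/- Let X ⊆ ℝ^d be convex, let f : ℝ^d → ℝ be differentiable and L-smooth on X with L > 0. Let x, s ∈ X, g ∈ ℝ^d, η ∈ [0,1], α > 0, and suppose s satisfies ⟨g, s⟩ ≤ ⟨g, z⟩ for all z ∈ X. Then, with x⁺ = x + η(s − x), for every z ∈ X one has η·⟨∇f(x), x − z⟩ ≤ f(x) − f(x⁺) + (α/L)·‖∇f(x) − g‖² + (L·η²/α)·‖s − z‖² + (L·η²/2)·‖s − x‖². -/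
open scoped RealInnerProductSpace

/-!
Write `p = f' x` and `x⁺ = x + η • (s - x)`. Smoothness along the segment from `x` to `x⁺` gives the
quadratic upper bound `f x⁺ ≤ f x + η * p (s - x) + (L * η ^ 2 / 2) * ‖s - x‖ ^ 2`. Splitting
`p (x - z) = p (s - z) - p (s - x)` leaves the term `η * p (s - z)`. The optimality of `s` for the
estimate `g` lets one replace `p` there by the error `p - g`, and Young's inequality with weight
`α / L` separates `‖p - g‖` from `‖s - z‖`. Only the duality pairing is used, so the
inequality holds in any normed space, with derivatives and gradient estimates in the dual.
-/

open Set AffineMap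

theorem mul_le_mul_sq_add_inv_mul_sq {𝕜 : Type*} [Field 𝕜] [LinearOrder 𝕜]
    [IsStrictOrderedRing 𝕜] {a b ε : 𝕜} (hε : 0 < ε) : a * b ≤ ε * a ^ 2 + ε⁻¹ * b ^ 2 := by
  have hyoung : 2 * a * b ≤ ε * a ^ 2 + ε⁻¹ * b ^ 2 := two_mul_le_add_mul_sq hε
  have hnonneg : 0 ≤ ε * a ^ 2 + ε⁻¹ * b ^ 2 := by positivity
  linarith

theorem apply_sub_le_norm_sub_mul_norm_sub {E : Type*} [SeminormedAddCommGroup E]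
    [NormedSpace ℝ E] {g : StrongDual ℝ E} {s z : E} (hgz : g s ≤ g z) (p : StrongDual ℝ E) :
    p (s - z) ≤ ‖p - g‖ * ‖s - z‖ :=
  calc p (s - z) = (p - g) (s - z) + (g s - g z) := by simp
    _ ≤ (p - g) (s - z) := by linarith
    _ ≤ ‖(p - g) (s - z)‖ := Real.le_norm_self _
    _ ≤ ‖p - g‖ * ‖s - z‖ := (p - g).le_opNorm _

section Taylor

variable {E F : Type*} [NormedAddCommGroup E] [NormedSpace ℝ E]
  [NormedAddCommGroup F] [NormedSpace ℝ F]

theorem norm_image_sub_sub_smul_le_of_norm_deriv_sub_le {φ φ' : ℝ → F} {v : F} {a b C : ℝ}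
    (hφ : ∀ t ∈ Icc a b, HasDerivWithinAt φ (φ' t) (Icc a b) t)
    (bound : ∀ t ∈ Ico a b, ‖φ' t - v‖ ≤ C * (t - a)) :
    ∀ t ∈ Icc a b, ‖φ t - φ a - (t - a) • v‖ ≤ C / 2 * (t - a) ^ 2 := by
  have hrem : ∀ t ∈ Icc a b,
      HasDerivWithinAt (fun t ↦ φ t - φ a - (t - a) • v) (φ' t - v) (Icc a b) t := fun t ht ↦ by
    simpa using! ((hφ t ht).sub_const (φ a)).sub
      (((hasDerivWithinAt_id t _).sub_const a).smul_const v)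
  have hquad : ∀ t, HasDerivAt (fun t ↦ C / 2 * (t - a) ^ 2) (C * (t - a)) t := fun t ↦ by
    refine ((((hasDerivAt_id' t).sub_const a).pow 2).const_mul (C / 2)).congr_deriv ?_
    simp only [Nat.cast_ofNat, Nat.add_one_sub_one, pow_one, mul_one]
    ring
  exact image_norm_le_of_norm_deriv_right_le_deriv_boundary
    (fun t ht ↦ (hrem t ht).continuousWithinAt)
    (fun t ht ↦ (hrem t (Ico_subset_Icc_self ht)).mono_of_mem_nhdsWithin
      (Icc_mem_nhdsGE_of_mem ht))
    (by simp) hquad bound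

theorem norm_image_sub_sub_fderiv_le_of_norm_fderiv_sub_le_segment
    {f : E → F} {f' : E → E →L[ℝ] F} {x y : E} {L : ℝ}
    (hf : ∀ w ∈ segment ℝ x y, HasFDerivWithinAt f (f' w) (segment ℝ x y) w)
    (bound : ∀ w ∈ segment ℝ x y, ‖f' w - f' x‖ ≤ L * ‖w - x‖) :
    ‖f y - f x - f' x (y - x)‖ ≤ L / 2 * ‖y - x‖ ^ 2 := by
  have hmem : MapsTo (lineMap x y) (Icc (0 : ℝ) 1) (segment ℝ x y) :=
    fun _ ht ↦ lineMap_mem_segment ℝ x y ht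
  have hderiv : ∀ t ∈ Icc (0 : ℝ) 1, HasDerivWithinAt (f ∘ lineMap x y)
      (f' (lineMap x y t) (y - x)) (Icc 0 1) t := fun t ht ↦
    (hf _ (hmem ht)).comp_hasDerivWithinAt t hasDerivWithinAt_lineMap hmem
  have hlip : ∀ t ∈ Ico (0 : ℝ) 1,
      ‖f' (lineMap x y t) (y - x) - f' x (y - x)‖ ≤ L * ‖y - x‖ ^ 2 * (t - 0) := fun t ht ↦
    calc ‖(f' (lineMap x y t) - f' x) (y - x)‖
        ≤ ‖f' (lineMap x y t) - f' x‖ * ‖y - x‖ := ContinuousLinearMap.le_opNorm _ _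
      _ ≤ L * ‖lineMap x y t - x‖ * ‖y - x‖ := by
        gcongr
        exact bound _ (hmem (Ico_subset_Icc_self ht))
      _ = L * ‖y - x‖ ^ 2 * (t - 0) := by
        rw [lineMap_apply_module', add_sub_cancel_right, norm_smul, Real.norm_of_nonneg ht.1]
        ring
  have htaylor := norm_image_sub_sub_smul_le_of_norm_deriv_sub_le hderiv hlip 1
    (right_mem_Icc.2 zero_le_one)
  simp only [Function.comp_apply, lineMap_apply_one, lineMap_apply_zero, sub_zero, one_smul,
    one_pow, mul_one] at htaylor
  linarith

end Taylor

section FrankWolfe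

variable {E : Type*} [NormedAddCommGroup E] [NormedSpace ℝ E]

theorem image_add_smul_sub_le_of_norm_fderiv_sub_le {X : Set E} {f : E → ℝ}
    {f' : E → StrongDual ℝ E} {x s : E} {L η : ℝ} (hX : StarConvex ℝ x X)
    (hf : ∀ y ∈ X, HasFDerivWithinAt f (f' y) X y)
    (hsmooth : ∀ y ∈ X, ‖f' y - f' x‖ ≤ L * ‖y - x‖) (hs : s ∈ X) (hη : η ∈ Icc (0 : ℝ) 1) :
    f (x + η • (s - x)) ≤ f x + η * f' x (s - x) + L * η ^ 2 / 2 * ‖s - x‖ ^ 2 := by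
  have hsub : segment ℝ x (x + η • (s - x)) ⊆ X :=
    hX.segment_subset (hX.add_smul_sub_mem hs hη.1 hη.2)
  have htaylor := (Real.le_norm_self _).trans <|
    norm_image_sub_sub_fderiv_le_of_norm_fderiv_sub_le_segment
      (fun w hw ↦ (hf w (hsub hw)).mono hsub) (fun w hw ↦ hsmooth w (hsub hw))
  rw [add_sub_cancel_left, map_smul, smul_eq_mul, norm_smul, mul_pow, Real.norm_eq_abs,
    sq_abs] at htaylor
  linarith

theorem fw_gap_inequality_nonconvex_general {X : Set E} {f : E → ℝ} {f' : E → StrongDual ℝ E}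
    {x s : E} {g : StrongDual ℝ E} {L η α : ℝ} (hX : StarConvex ℝ x X) (hL : 0 < L)
    (hf : ∀ y ∈ X, HasFDerivWithinAt f (f' y) X y)
    (hsmooth : ∀ y ∈ X, ‖f' y - f' x‖ ≤ L * ‖y - x‖) (hs : s ∈ X)
    (hη : η ∈ Icc (0 : ℝ) 1) (hα : 0 < α) (hmin : IsMinOn g X s) :
    ∀ z ∈ X,
      η * f' x (x - z) ≤
        f x - f (x + η • (s - x))
          + (α / L) * ‖f' x - g‖ ^ 2
          + (L * η ^ 2 / α) * ‖s - z‖ ^ 2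
          + (L * η ^ 2 / 2) * ‖s - x‖ ^ 2 := by
  intro z hz
  have hdescent := image_add_smul_sub_le_of_norm_fderiv_sub_le hX hf hsmooth hs hη
  have herror : η * f' x (s - z) ≤ α / L * ‖f' x - g‖ ^ 2 + L * η ^ 2 / α * ‖s - z‖ ^ 2 :=
    calc η * f' x (s - z) ≤ η * (‖f' x - g‖ * ‖s - z‖) :=
          mul_le_mul_of_nonneg_left (apply_sub_le_norm_sub_mul_norm_sub (hmin hz) (f' x)) hη.1
      _ = ‖f' x - g‖ * (η * ‖s - z‖) := mul_left_comm _ _ _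
      _ ≤ α / L * ‖f' x - g‖ ^ 2 + (α / L)⁻¹ * (η * ‖s - z‖) ^ 2 :=
          mul_le_mul_sq_add_inv_mul_sq (div_pos hα hL)
      _ = α / L * ‖f' x - g‖ ^ 2 + L * η ^ 2 / α * ‖s - z‖ ^ 2 := by rw [inv_div]; ring
  have hsplit : η * f' x (x - z) = η * f' x (s - z) - η * f' x (s - x) := by
    simp only [map_sub]
    ring
  linarith

end FrankWolfe

/-- Per-iteration Frank–Wolfe-gap inequality with an inexact gradient estimate
`g` on a convex set `X`, for an `L`-smooth (not necessarily convex) function `f`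
(proof of Theorem 2 of the paper, before taking expectations). -/
theorem fw_gap_inequality_nonconvex {d : ℕ}
    (X : Set (EuclideanSpace ℝ (Fin d))) (hX : Convex ℝ X)
    (f : EuclideanSpace ℝ (Fin d) → ℝ) (L : ℝ) (hL : 0 < L)
    (hdiff : Differentiable ℝ f)
    (hsmooth : ∀ x ∈ X, ∀ y ∈ X, ‖gradient f x - gradient f y‖ ≤ L * ‖x - y‖)
    (x s : EuclideanSpace ℝ (Fin d)) (hx : x ∈ X) (hs : s ∈ X)
    (g : EuclideanSpace ℝ (Fin d)) (η α : ℝ)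
    (hη : η ∈ Set.Icc (0 : ℝ) 1) (hα : 0 < α)
    (hmin : ∀ z ∈ X, ⟪g, s⟫ ≤ ⟪g, z⟫) :
    ∀ z ∈ X,
      η * ⟪gradient f x, x - z⟫ ≤
        f x - f (x + η • (s - x))
          + (α / L) * ‖gradient f x - g‖ ^ 2
          + (L * η ^ 2 / α) * ‖s - z‖ ^ 2
          + (L * η ^ 2 / 2) * ‖s - x‖ ^ 2 := by
  simpa only [← map_sub, LinearIsometryEquiv.norm_map, InnerProductSpace.toDual_apply_apply]
    using fw_gap_inequality_nonconvex_general (hX.starConvex hx) hL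
      (fun y _ ↦ (hdiff y).hasGradientAt.hasFDerivAt.hasFDerivWithinAt)
      (fun y hy ↦ by simpa only [← map_sub, LinearIsometryEquiv.norm_map] using hsmooth y hy x hx)
      hs hη hα (g := InnerProductSpace.toDual ℝ _ g) hmin
end

section
/- Let n ≥ 1 and for each i ∈ {1,…,n} let f_i : ℝ^d → ℝ be differentiable with ‖∇f_i(u) − ∇f_i(v)‖ ≤ L_i·‖u − v‖ for all u, v ∈ ℝ^d, where L_i ≥ 0. Set f = (1/n)·Σ_{i=1}^n f_i and L̃² = (1/n)·Σ_{i=1}^n L_i². Then for every x, y, g ∈ ℝ^d: (1/n)·Σ_{i=1}^n ‖ g + ∇f_i(y) − ∇f_i(x) − ∇f(y) ‖² ≤ ‖ g − ∇f(x) ‖² + L̃²·‖ y − x ‖². -/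
/-!
Draw `i` with probability `wᵢ`. The SARAH error is the random vector `aᵢ = ∇fᵢ(y) − ∇fᵢ(x)`, whose
mean is `∇F(y) − ∇F(x)`, measured from the point `∇F(y) − g`. The bias-variance decomposition
splits its second moment into the squared bias `‖g − ∇F(x)‖²` and the variance of `aᵢ`. The
variance is at most the second moment about the origin, which the Lipschitz bounds control.
-/

open scoped ComplexConjugate

section Gradient

variable {𝕜 E : Type*} [RCLike 𝕜] [NormedAddCommGroup E] [InnerProductSpace 𝕜 E] [CompleteSpace E]

lemma hasGradientAt_fun_sum {ι : Type*} {s : Finset ι} {f : ι → E → 𝕜} {f' : ι → E} {x : E}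
    (hf : ∀ i ∈ s, HasGradientAt (f i) (f' i) x) :
    HasGradientAt (fun z => ∑ i ∈ s, f i z) (∑ i ∈ s, f' i) x := by
  rw [hasGradientAt_iff_hasFDerivAt, map_sum]
  exact HasFDerivAt.fun_sum fun i hi => (hf i hi).hasFDerivAt

lemma hasGradientAt_const_mul {f : E → 𝕜} {f' x : E} (c : 𝕜) (hf : HasGradientAt f f' x) :
    HasGradientAt (fun z => c * f z) (conj c • f') x := by
  rw [hasGradientAt_iff_hasFDerivAt, map_smulₛₗ, RCLike.conj_conj]
  exact hf.hasFDerivAt.const_mul c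

lemma gradient_sum_const_mul {ι : Type*} {s : Finset ι} {f : ι → E → 𝕜} {x : E} (c : ι → 𝕜)
    (hf : ∀ i ∈ s, DifferentiableAt 𝕜 (f i) x) :
    gradient (fun z => ∑ i ∈ s, c i * f i z) x = ∑ i ∈ s, conj (c i) • gradient (f i) x :=
  (hasGradientAt_fun_sum fun i hi => hasGradientAt_const_mul (c i) (hf i hi).hasGradientAt).gradient

end Gradient

section Variance

variable {ι E : Type*} [SeminormedAddCommGroup E] [InnerProductSpace ℝ E]
  {s : Finset ι} {w : ι → ℝ}

lemma sum_mul_norm_sub_sq_eq_add_norm_sum_smul_sub_sq (hw : ∑ i ∈ s, w i = 1) (a : ι → E) (c : E) :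
    ∑ i ∈ s, w i * ‖a i - c‖ ^ 2
      = ∑ i ∈ s, w i * ‖a i - ∑ j ∈ s, w j • a j‖ ^ 2 + ‖∑ j ∈ s, w j • a j - c‖ ^ 2 := by
  set m := ∑ j ∈ s, w j • a j with hm
  have expand (i : ι) : ‖a i - c‖ ^ 2
      = ‖a i - m‖ ^ 2 + 2 * inner ℝ (a i - m) (m - c) + ‖m - c‖ ^ 2 := by
    rw [← norm_add_sq_real, sub_add_sub_cancel]
  have centered : ∑ i ∈ s, w i • (a i - m) = 0 := by
    simp only [smul_sub, Finset.sum_sub_distrib, ← Finset.sum_smul, hw, one_smul, ← hm, sub_self]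
  have uncorrelated : ∑ i ∈ s, w i * inner ℝ (a i - m) (m - c) = 0 := by
    simp only [← real_inner_smul_left, ← sum_inner, centered, inner_zero_left]
  simp only [expand, mul_add, mul_left_comm _ (2 : ℝ), Finset.sum_add_distrib, ← Finset.mul_sum,
    uncorrelated, mul_zero, add_zero, ← Finset.sum_mul, hw, one_mul]

lemma sum_mul_norm_sub_sum_smul_sq_le (hw : ∑ i ∈ s, w i = 1) (a : ι → E) :
    ∑ i ∈ s, w i * ‖a i - ∑ j ∈ s, w j • a j‖ ^ 2 ≤ ∑ i ∈ s, w i * ‖a i‖ ^ 2 := by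
  have decomposition := sum_mul_norm_sub_sq_eq_add_norm_sum_smul_sub_sq hw a 0
  simp only [sub_zero] at decomposition
  rw [decomposition]
  exact le_add_of_nonneg_right (sq_nonneg _)

end Variance

theorem sarah_variance_recursion_single_sample_general {ι E : Type*} [NormedAddCommGroup E]
    [InnerProductSpace ℝ E] [CompleteSpace E] {s : Finset ι} {w : ι → ℝ}
    (hw₀ : ∀ i ∈ s, 0 ≤ w i) (hw₁ : ∑ i ∈ s, w i = 1)
    {f : ι → E → ℝ} {L : ι → ℝ} {x y : E}
    (hfx : ∀ i ∈ s, DifferentiableAt ℝ (f i) x) (hfy : ∀ i ∈ s, DifferentiableAt ℝ (f i) y)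
    (hlip : ∀ i ∈ s, ‖gradient (f i) y - gradient (f i) x‖ ≤ L i * ‖y - x‖)
    {F : E → ℝ} (hF : F = fun z => ∑ i ∈ s, w i * f i z) (g : E) :
    ∑ i ∈ s, w i * ‖g + gradient (f i) y - gradient (f i) x - gradient F y‖ ^ 2
      ≤ ‖g - gradient F x‖ ^ 2 + (∑ i ∈ s, w i * L i ^ 2) * ‖y - x‖ ^ 2 := by
  let a i := gradient (f i) y - gradient (f i) x
  have mean : ∑ i ∈ s, w i • a i = gradient F y - gradient F x := by
    simp only [a, hF, gradient_sum_const_mul w hfx, gradient_sum_const_mul w hfy, conj_trivial,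
      smul_sub, Finset.sum_sub_distrib]
  have second_moment : ∑ i ∈ s, w i * ‖a i‖ ^ 2 ≤ (∑ i ∈ s, w i * L i ^ 2) * ‖y - x‖ ^ 2 := by
    simp only [Finset.sum_mul, mul_assoc, ← mul_pow]
    gcongr with i hi
    · exact hw₀ i hi
    · exact hlip i hi
  calc ∑ i ∈ s, w i * ‖g + gradient (f i) y - gradient (f i) x - gradient F y‖ ^ 2
      = ∑ i ∈ s, w i * ‖a i - (gradient F y - g)‖ ^ 2 := by
        congr! 4; simp only [a]; abel
    _ = ‖g - gradient F x‖ ^ 2 + ∑ i ∈ s, w i * ‖a i - ∑ j ∈ s, w j • a j‖ ^ 2 := by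
        rw [sum_mul_norm_sub_sq_eq_add_norm_sum_smul_sub_sq hw₁, mean,
          sub_sub_sub_cancel_left, add_comm]
    _ ≤ ‖g - gradient F x‖ ^ 2 + (∑ i ∈ s, w i * L i ^ 2) * ‖y - x‖ ^ 2 := by
        gcongr
        exact (sum_mul_norm_sub_sum_smul_sq_le hw₁ a).trans second_moment

/-- Single-sample (`b = 1`) SARAH variance recursion: the expected squared error
of the estimator `g + ∇fᵢ(y) − ∇fᵢ(x)` (with `i` uniform) is at most
`‖g − ∇f(x)‖² + L̃²‖y − x‖²`. -/
theorem sarah_variance_recursion_single_sample {d n : ℕ} (hn : 1 ≤ n)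
    (f : Fin n → EuclideanSpace ℝ (Fin d) → ℝ) (L : Fin n → ℝ)
    (hL : ∀ i, 0 ≤ L i)
    (hdiff : ∀ i, Differentiable ℝ (f i))
    (hlip : ∀ i, ∀ u v, ‖gradient (f i) u - gradient (f i) v‖ ≤ L i * ‖u - v‖)
    (F : EuclideanSpace ℝ (Fin d) → ℝ)
    (hF : F = fun x => (1 / (n : ℝ)) * ∑ i, f i x)
    (Lt2 : ℝ) (hLt2 : Lt2 = (1 / (n : ℝ)) * ∑ i, (L i) ^ 2)
    (x y g : EuclideanSpace ℝ (Fin d)) :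
    (1 / (n : ℝ)) * ∑ i, ‖g + gradient (f i) y - gradient (f i) x - gradient F y‖ ^ 2
      ≤ ‖g - gradient F x‖ ^ 2 + Lt2 * ‖y - x‖ ^ 2 := by
  have hw : ∑ _i : Fin n, 1 / (n : ℝ) = 1 := by simp [Nat.one_le_iff_ne_zero.mp hn]
  simpa only [hLt2, Finset.mul_sum] using sarah_variance_recursion_single_sample_general
    (fun _ _ => by positivity) hw (fun i _ => hdiff i x) (fun i _ => hdiff i y)
    (fun i _ => hlip i y x) (by simpa only [Finset.mul_sum] using hF) g
end

section
/- Let n ≥ 1, b ≥ 1, and for each i ∈ {1,…,n} let f_i : ℝ^d → ℝ be differentiable with ‖∇f_i(u) − ∇f_i(v)‖ ≤ L_i·‖u − v‖ for all u, v ∈ ℝ^d, where L_i ≥ 0. Set f = (1/n)·Σ_{i=1}^n f_i and L̃² = (1/n)·Σ_{i=1}^n L_i². Then for every x, y, g ∈ ℝ^d, averaging over all b-tuples σ ∈ {1,…,n}^b (i.i.d. uniform sampling with replacement): (1/n^b)·Σ_{σ ∈ {1,…,n}^b} ‖ g + (1/b)·Σ_{l=1}^b ( ∇f_{σ(l)}(y)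 − ∇f_{σ(l)}(x) ) − ∇f(y) ‖² ≤ ‖ g − ∇f(x) ‖² + (L̃²/b)·‖ y − x ‖². -/
/-!
Write `v i = ∇f_i(y) - ∇f_i(x)`, whose mean over `i` is `m = ∇f(y) - ∇f(x)`. The error of the
estimator is `(g - ∇f(x)) + (1/b) ∑ l, (v (σ l) - m)`: a constant plus `b` independent centred
terms. The cross terms vanish in expectation, so the expected squared error is
`‖g - ∇f(x)‖²` plus `1/b` times the variance of `v`, and the variance of `v` is at most its second
moment, which the Lipschitz bounds control.
-/

open scoped BigOperators Gradient

section Gradient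

variable {𝕜 E ι : Type*} [RCLike 𝕜] [NormedAddCommGroup E] [InnerProductSpace 𝕜 E]
  [CompleteSpace E] [Fintype ι]

theorem card_smul_gradient_expect {f : ι → E → 𝕜} {x : E}
    (hf : ∀ i, DifferentiableAt 𝕜 (f i) x) :
    Fintype.card ι • ∇ (fun z ↦ 𝔼 i, f i z) x = ∑ i, ∇ (f i) x := by
  have hmean : DifferentiableAt 𝕜 (fun z ↦ 𝔼 i, f i z) x := by
    simp only [Fintype.expect_eq_sum_div_card]
    fun_prop
  have hfderiv : Fintype.card ι • fderiv 𝕜 (fun z ↦ 𝔼 i, f i z) x = ∑ i, fderiv 𝕜 (f i) x := by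
    rw [← fderiv_fun_sum fun i _ ↦ hf i, ← fderiv_fun_const_smul hmean]
    simp only [Fintype.card_smul_expect]
  simp only [gradient, ← map_nsmul, ← map_sum, hfderiv]

end Gradient

-- A vector mean is described by `card • m = ∑ i, v i` because `𝔼 i, v i` would need `Module ℚ≥0 M`,
-- which a real inner product space does not come with.
theorem sum_sub_eq_zero_of_card_smul_eq_sum {ι M : Type*} [AddCommGroup M] [Fintype ι] {v : ι → M}
    {m : M} (hm : Fintype.card ι • m = ∑ i, v i) : ∑ i, (v i - m) = 0 := by
  simp [Finset.sum_sub_distrib, hm]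

theorem expect_pi_fin_succ {b : ℕ} {Ω : Fin (b + 1) → Type*} [∀ l, Fintype (Ω l)]
    {M : Type*} [AddCommMonoid M] [Module ℚ≥0 M] (φ : (∀ l, Ω l) → M) :
    𝔼 σ, φ σ = 𝔼 i, 𝔼 τ : ∀ l : Fin b, Ω l.succ, φ (Fin.cons i τ) := by
  rw [← Finset.expect_product', Finset.univ_product_univ]
  exact (Fintype.expect_equiv (Fin.consEquiv Ω) _ _ fun _ ↦ rfl).symm

section Variance

variable {E ι : Type*} [NormedAddCommGroup E] [InnerProductSpace ℝ E] [Fintype ι] [Nonempty ι]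

theorem expect_norm_add_sq_of_sum_eq_zero {e : ι → E} (he : ∑ i, e i = 0) (a : E) :
    𝔼 i, ‖a + e i‖ ^ 2 = ‖a‖ ^ 2 + 𝔼 i, ‖e i‖ ^ 2 := by
  have hcross : 𝔼 i, 2 * inner ℝ a (e i) = 0 := by
    rw [← Finset.mul_expect, Fintype.expect_eq_sum_div_card, ← inner_sum, he, inner_zero_right,
      zero_div, mul_zero]
  simp only [norm_add_sq_real, Finset.expect_add_distrib, hcross, Fintype.expect_const, add_zero]

theorem expect_norm_sub_sq_le_of_card_smul_eq_sum {v : ι → E} {m : E}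
    (hm : Fintype.card ι • m = ∑ i, v i) : 𝔼 i, ‖v i - m‖ ^ 2 ≤ 𝔼 i, ‖v i‖ ^ 2 :=
  calc 𝔼 i, ‖v i - m‖ ^ 2 ≤ ‖m‖ ^ 2 + 𝔼 i, ‖v i - m‖ ^ 2 := le_add_of_nonneg_left (sq_nonneg _)
    _ = 𝔼 i, ‖m + (v i - m)‖ ^ 2 :=
      (expect_norm_add_sq_of_sum_eq_zero (sum_sub_eq_zero_of_card_smul_eq_sum hm) m).symm
    _ = 𝔼 i, ‖v i‖ ^ 2 := by simp only [add_sub_cancel]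

theorem expect_norm_add_sum_sq_of_sum_eq_zero {b : ℕ} {Ω : Fin b → Type*} [∀ l, Fintype (Ω l)]
    [∀ l, Nonempty (Ω l)] {e : ∀ l, Ω l → E} (he : ∀ l, ∑ i, e l i = 0) (a : E) :
    𝔼 σ : ∀ l, Ω l, ‖a + ∑ l, e l (σ l)‖ ^ 2 = ‖a‖ ^ 2 + ∑ l, 𝔼 i, ‖e l i‖ ^ 2 := by
  induction b generalizing a with
  | zero => simp
  | succ b ih =>
    calc 𝔼 σ : ∀ l, Ω l, ‖a + ∑ l, e l (σ l)‖ ^ 2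
        = 𝔼 i, 𝔼 τ : ∀ l : Fin b, Ω l.succ, ‖(a + e 0 i) + ∑ l, e l.succ (τ l)‖ ^ 2 := by
          simp only [expect_pi_fin_succ, Fin.sum_univ_succ, Fin.cons_zero, Fin.cons_succ,
            add_assoc]
      _ = 𝔼 i, (‖a + e 0 i‖ ^ 2 + ∑ l : Fin b, 𝔼 j, ‖e l.succ j‖ ^ 2) := by
          simp only [ih fun l : Fin b ↦ he l.succ]
      _ = ‖a‖ ^ 2 + ∑ l, 𝔼 i, ‖e l i‖ ^ 2 := by
          rw [Finset.expect_add_distrib, Fintype.expect_const,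
            expect_norm_add_sq_of_sum_eq_zero (he 0), Fin.sum_univ_succ, add_assoc]

theorem expect_norm_add_sample_mean_sub_sq {b : ℕ} (hb : b ≠ 0) {v : ι → E} {m : E}
    (hm : Fintype.card ι • m = ∑ i, v i) (a : E) :
    𝔼 σ : Fin b → ι, ‖a + ((1 / (b : ℝ)) • ∑ l, v (σ l) - m)‖ ^ 2
      = ‖a‖ ^ 2 + (𝔼 i, ‖v i - m‖ ^ 2) / b := by
  have hb' : (b : ℝ) ≠ 0 := Nat.cast_ne_zero.mpr hb
  have hsplit (σ : Fin b → ι) :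
      (1 / (b : ℝ)) • ∑ l, v (σ l) - m = ∑ l, (1 / (b : ℝ)) • (v (σ l) - m) := by
    rw [← Finset.smul_sum, Finset.sum_sub_distrib, smul_sub, Finset.sum_const, Finset.card_univ,
      Fintype.card_fin, ← Nat.cast_smul_eq_nsmul ℝ, smul_smul, one_div_mul_cancel hb', one_smul]
  have hcentred : ∑ i, (1 / (b : ℝ)) • (v i - m) = 0 := by
    rw [← Finset.smul_sum, sum_sub_eq_zero_of_card_smul_eq_sum hm, smul_zero]
  have hscale : 𝔼 i, ‖(1 / (b : ℝ)) • (v i - m)‖ ^ 2 = (1 / (b : ℝ)) ^ 2 * 𝔼 i, ‖v i - m‖ ^ 2 := by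
    simp only [norm_smul, mul_pow, Real.norm_eq_abs, sq_abs, Finset.mul_expect]
  simp only [hsplit]
  rw [expect_norm_add_sum_sq_of_sum_eq_zero (fun _ ↦ hcentred), hscale, Finset.sum_const,
    Finset.card_univ, Fintype.card_fin, nsmul_eq_mul]
  field_simp

end Variance

theorem sarah_variance_recursion_minibatch_general {E ι : Type*} [NormedAddCommGroup E]
    [InnerProductSpace ℝ E] [CompleteSpace E] [Fintype ι] [Nonempty ι] {b : ℕ} (hb : b ≠ 0)
    {f : ι → E → ℝ} {L : ι → ℝ} {x y : E} (hfx : ∀ i, DifferentiableAt ℝ (f i) x)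
    (hfy : ∀ i, DifferentiableAt ℝ (f i) y)
    (hlip : ∀ i, ‖∇ (f i) y - ∇ (f i) x‖ ≤ L i * ‖y - x‖) (g : E) :
    𝔼 σ : Fin b → ι, ‖g + (1 / (b : ℝ)) • (∑ l, (∇ (f (σ l)) y - ∇ (f (σ l)) x))
        - ∇ (fun z ↦ 𝔼 i, f i z) y‖ ^ 2
      ≤ ‖g - ∇ (fun z ↦ 𝔼 i, f i z) x‖ ^ 2 + (𝔼 i, L i ^ 2) / b * ‖y - x‖ ^ 2 := by
  set F : E → ℝ := fun z ↦ 𝔼 i, f i z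
  set v : ι → E := fun i ↦ ∇ (f i) y - ∇ (f i) x
  have hm : Fintype.card ι • (∇ F y - ∇ F x) = ∑ i, v i := by
    rw [smul_sub, card_smul_gradient_expect hfx, card_smul_gradient_expect hfy,
      Finset.sum_sub_distrib]
  have hsecond : 𝔼 i, ‖v i‖ ^ 2 ≤ (𝔼 i, L i ^ 2) * ‖y - x‖ ^ 2 := by
    simp only [Finset.expect_mul, ← mul_pow]
    gcongr with i
    exact hlip i
  calc 𝔼 σ : Fin b → ι, ‖g + (1 / (b : ℝ)) • (∑ l, v (σ l)) - ∇ F y‖ ^ 2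
      = 𝔼 σ : Fin b → ι,
          ‖(g - ∇ F x) + ((1 / (b : ℝ)) • ∑ l, v (σ l) - (∇ F y - ∇ F x))‖ ^ 2 := by
        refine Finset.expect_congr rfl fun σ _ ↦ ?_
        congr 2
        abel
    _ = ‖g - ∇ F x‖ ^ 2 + (𝔼 i, ‖v i - (∇ F y - ∇ F x)‖ ^ 2) / b :=
        expect_norm_add_sample_mean_sub_sq hb hm _
    _ ≤ ‖g - ∇ F x‖ ^ 2 + (𝔼 i, L i ^ 2) * ‖y - x‖ ^ 2 / b := by
        gcongr
        exact (expect_norm_sub_sq_le_of_card_smul_eq_sum hm).trans hsecond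
    _ = ‖g - ∇ F x‖ ^ 2 + (𝔼 i, L i ^ 2) / b * ‖y - x‖ ^ 2 := by rw [mul_div_right_comm]

/-- Mini-batch SARAH variance recursion with batch size `b` and i.i.d. uniform
sampling with replacement (average over all `b`-tuples): the expected squared
error of the estimator is at most `‖g − ∇f(x)‖² + (L̃²/b)‖y − x‖²`. -/
theorem sarah_variance_recursion_minibatch {d n b : ℕ} (hn : 1 ≤ n) (hb : 1 ≤ b)
    (f : Fin n → EuclideanSpace ℝ (Fin d) → ℝ) (L : Fin n → ℝ)
    (hL : ∀ i, 0 ≤ L i)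
    (hdiff : ∀ i, Differentiable ℝ (f i))
    (hlip : ∀ i, ∀ u v, ‖gradient (f i) u - gradient (f i) v‖ ≤ L i * ‖u - v‖)
    (F : EuclideanSpace ℝ (Fin d) → ℝ)
    (hF : F = fun x => (1 / (n : ℝ)) * ∑ i, f i x)
    (Lt2 : ℝ) (hLt2 : Lt2 = (1 / (n : ℝ)) * ∑ i, (L i) ^ 2)
    (x y g : EuclideanSpace ℝ (Fin d)) :
    (1 / (n : ℝ) ^ b) * ∑ σ : Fin b → Fin n,
        ‖g + (1 / (b : ℝ)) • (∑ l, (gradient (f (σ l)) y - gradient (f (σ l)) x))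
          - gradient F y‖ ^ 2
      ≤ ‖g - gradient F x‖ ^ 2 + (Lt2 / b) * ‖y - x‖ ^ 2 := by
  have : NeZero n := ⟨Nat.one_le_iff_ne_zero.mp hn⟩
  subst hF hLt2
  simpa [Fintype.expect_eq_sum_div_card, div_eq_inv_mul] using
    sarah_variance_recursion_minibatch_general (Nat.one_le_iff_ne_zero.mp hb)
      (fun i ↦ hdiff i x) (fun i ↦ hdiff i y) (fun i ↦ hlip i y x) g
end

section
/- Let L > 0, L̃ ≥ L, D > 0, p ∈ (0,1), and b ≥ 1. Set α = sqrt(p·b)·L / ( sqrt(1−p)·L̃ ) and M = 2α/(p·L). Let (a_k)_{k≥0} and (v_k)_{k≥0} be sequences of nonnegative reals and (η_k)_{k≥0} a sequence with 0 ≤ η_k ≤ p/2, satisfying for all k: a_{k+1} ≤ (1 − η_k)·a_k + (α/L)·v_k + (L/α)·D²·η_k² + (L/2)·D²·η_k², and v_{k+1} ≤ (1 − p)·v_k + ((1 − p)·L̃²·D²/b)·η_k². Then the Lyapunov sequence Φ_k := a_k + M·v_k satisfies, for all k: Φ_{k+1} ≤ (1 − η_k)·Φ_k + L·D²·η_k²·(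 1/2 + 3·(L̃/L)·sqrt( (1−p)/(p·b) ) ). -/
/-!
Put `κ = L̃ √((1 - p) / (p b))`. Then `α = L / κ`, and the noise injected into `v` is
`p κ² D² η²`. Hence the recursion for `a` has coupling `κ⁻¹ v` and noise `κ D² η²`, while the
weight `M = 2 / (p κ)` turns the noise of `v` into `2 κ D² η²`; together they give `3 κ D² η²`.
Half of the contraction `p M` of the `M v` term pays for the coupling, `κ⁻¹ = M p / 2`, and the
other half leaves the factor `1 - p / 2 ≤ 1 - η`.
-/

theorem add_mul_le_of_coupled_recursion {R : Type*} [CommSemiring R] [PartialOrder R]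
    [IsOrderedRing R] {a a' v v' r q c d e M : R} (hM : 0 ≤ M) (hv : 0 ≤ v)
    (hcoupling : c + M * q ≤ r * M) (ha' : a' ≤ r * a + c * v + e) (hv' : v' ≤ q * v + d) :
    a' + M * v' ≤ r * (a + M * v) + (e + M * d) :=
  calc
    a' + M * v' ≤ (r * a + c * v + e) + M * (q * v + d) := by gcongr
    _ = r * a + (c + M * q) * v + (e + M * d) := by ring
    _ ≤ r * a + r * M * v + (e + M * d) := by gcongr
    _ = r * (a + M * v) + (e + M * d) := by ring

theorem add_two_div_mul_le_of_coupled_recursion {K : Type*} [Field K] [LinearOrder K]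
    [IsStrictOrderedRing K] {a a' v v' p η κ δ e : K} (hp : 0 < p) (hκ : 0 < κ) (hv : 0 ≤ v)
    (hη : η ≤ p / 2) (ha' : a' ≤ (1 - η) * a + κ⁻¹ * v + (κ * δ + e))
    (hv' : v' ≤ (1 - p) * v + p * κ ^ 2 * δ) :
    a' + 2 / (p * κ) * v' ≤ (1 - η) * (a + 2 / (p * κ) * v) + (3 * κ * δ + e) := by
  have hM : 0 ≤ 2 / (p * κ) := by positivity
  have hcoupling : κ⁻¹ + 2 / (p * κ) * (1 - p) ≤ (1 - η) * (2 / (p * κ)) :=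
    calc
      κ⁻¹ + 2 / (p * κ) * (1 - p) = (1 - p / 2) * (2 / (p * κ)) := by
        field_simp
        ring
      _ ≤ (1 - η) * (2 / (p * κ)) := by gcongr
  have hnoise : κ * δ + e + 2 / (p * κ) * (p * κ ^ 2 * δ) = 3 * κ * δ + e := by
    field_simp
    ring
  exact hnoise ▸ add_mul_le_of_coupled_recursion hM hv hcoupling ha' hv'

/-- The scale `κ = L̃ √((1 - p) / (p b))` of the SARAH estimator with refresh probability `p`,
batch size `b` and mean-square smoothness `L̃`: along steps of squared length `δ`, the recursion
bounding its mean-square error has the fixed point `κ² δ`. -/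
noncomputable def sarahNoiseScale (Lt p b : ℝ) : ℝ :=
  Lt * √((1 - p) / (p * b))

section sarahNoiseScale

variable {Lt p b : ℝ}

theorem sarahNoiseScale_pos (hLt : 0 < Lt) (hp : p ∈ Set.Ioo (0 : ℝ) 1) (hb : 0 < b) :
    0 < sarahNoiseScale Lt p b :=
  mul_pos hLt (Real.sqrt_pos.2 (div_pos (sub_pos.2 hp.2) (mul_pos hp.1 hb)))

theorem mul_sarahNoiseScale_sq (hp : p ∈ Set.Ioc (0 : ℝ) 1) (hb : 0 ≤ b) :
    p * sarahNoiseScale Lt p b ^ 2 = (1 - p) * Lt ^ 2 / b := by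
  have hp₀ : p ≠ 0 := hp.1.ne'
  have hratio : 0 ≤ (1 - p) / (p * b) :=
    div_nonneg (sub_nonneg.2 hp.2) (mul_nonneg hp.1.le hb)
  rw [sarahNoiseScale, mul_pow, Real.sq_sqrt hratio]
  field_simp

theorem div_sarahNoiseScale (L : ℝ) (hp : p ≤ 1) :
    L / sarahNoiseScale Lt p b = √(p * b) * L / (√(1 - p) * Lt) := by
  rw [sarahNoiseScale, Real.sqrt_div (sub_nonneg.2 hp), mul_div_assoc', div_div_eq_mul_div,
    mul_comm L, mul_comm Lt]

end sarahNoiseScale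

theorem sarah_fw_lyapunov_step_general {L Lt D p b α M a a' v v' η : ℝ} (hL : L ≠ 0)
    (hLt : 0 < Lt) (hp : p ∈ Set.Ioo (0 : ℝ) 1) (hb : 0 < b)
    (hα : α = √(p * b) * L / (√(1 - p) * Lt)) (hM : M = 2 * α / (p * L))
    (hv : 0 ≤ v) (hη : η ≤ p / 2)
    (ha' : a' ≤ (1 - η) * a + (α / L) * v + (L / α) * D ^ 2 * η ^ 2 + (L / 2) * D ^ 2 * η ^ 2)
    (hv' : v' ≤ (1 - p) * v + ((1 - p) * Lt ^ 2 * D ^ 2 / b) * η ^ 2) :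
    a' + M * v' ≤ (1 - η) * (a + M * v)
      + L * D ^ 2 * η ^ 2 * (1 / 2 + 3 * (Lt / L) * √((1 - p) / (p * b))) := by
  set κ := sarahNoiseScale Lt p b with hκ_def
  have hp₀ : 0 < p := hp.1
  have hκ : 0 < κ := sarahNoiseScale_pos hLt hp hb
  have hακ : α = L / κ := hα.trans (div_sarahNoiseScale L hp.2.le).symm
  have hMκ : M = 2 / (p * κ) := by rw [hM, hακ]; field_simp
  have hcoupling : α / L = κ⁻¹ := by rw [hακ]; field_simp
  have hyoung : L / α = κ := by rw [hακ]; field_simp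
  have hvar : (1 - p) * Lt ^ 2 * D ^ 2 / b * η ^ 2 = p * κ ^ 2 * (D ^ 2 * η ^ 2) := by
    rw [mul_sarahNoiseScale_sq ⟨hp₀, hp.2.le⟩ hb.le]; ring
  have herror : L * D ^ 2 * η ^ 2 * (1 / 2 + 3 * (Lt / L) * √((1 - p) / (p * b)))
      = 3 * κ * (D ^ 2 * η ^ 2) + L / 2 * D ^ 2 * η ^ 2 := by
    rw [hκ_def, sarahNoiseScale]; field_simp; ring
  rw [hcoupling, hyoung, add_assoc, mul_assoc κ] at ha'
  rw [hvar] at hv'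
  rw [hMκ, herror]
  exact add_two_div_mul_le_of_coupled_recursion hp₀ hκ hv hη ha' hv'

/-- Lyapunov combination step in the proof of Theorem 1 (Sarah Frank-Wolfe,
convex case): combining the two expectation recursions into a single
recursion for `Φ_k = a_k + M v_k`. -/
theorem sarah_fw_lyapunov_step (L Lt D p b α M : ℝ)
    (hL : 0 < L) (hLt : L ≤ Lt) (hD : 0 < D)
    (hp : p ∈ Set.Ioo (0 : ℝ) 1) (hb : 1 ≤ b)
    (hα : α = Real.sqrt (p * b) * L / (Real.sqrt (1 - p) * Lt))
    (hM : M = 2 * α / (p * L))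
    (a v η : ℕ → ℝ)
    (ha : ∀ k, 0 ≤ a k) (hv : ∀ k, 0 ≤ v k)
    (hηnn : ∀ k, 0 ≤ η k) (hηle : ∀ k, η k ≤ p / 2)
    (hrec1 : ∀ k, a (k + 1) ≤ (1 - η k) * a k + (α / L) * v k
      + (L / α) * D ^ 2 * η k ^ 2 + (L / 2) * D ^ 2 * η k ^ 2)
    (hrec2 : ∀ k, v (k + 1) ≤ (1 - p) * v k
      + ((1 - p) * Lt ^ 2 * D ^ 2 / b) * η k ^ 2) :
    ∀ k, a (k + 1) + M * v (k + 1) ≤ (1 - η k) * (a k + M * v k)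
      + L * D ^ 2 * η k ^ 2
        * (1 / 2 + 3 * (Lt / L) * Real.sqrt ((1 - p) / (p * b))) :=
  fun k => sarah_fw_lyapunov_step_general hL.ne' (hL.trans_le hLt) hp (one_pos.trans_le hb) hα hM
    (hv k) (hηle k) (hrec1 k) (hrec2 k)
end

section
/- Let L > 0, L̃ ≥ L, D > 0, p ∈ (0,1), b ≥ 1, and K ≥ 1 an integer; set α = sqrt(p·b)·L / ( sqrt(1−p)·L̃ ), M = 2α/(p·L), and k₀ = ⌈K/2⌉. Define step sizes η_k for 0 ≤ k < K by: if K ≤ 2/p then η_k = p/2 for all k; if K > 2/p then η_k = p/2 for k < k₀ and η_k = 2/(4/p + k − k₀) for k₀ ≤ k < K. Let (a_k)_{k=0}^K and (v_k)_{k=0}^K be nonnegative reals with v₀ = 0 satisfying, for all 0 ≤ k < K: a_{k+1} ≤ (1 − η_k)·a_k + (α/L)·v_k + (L/α)·D²·η_k² + (L/2)·D²·η_k², and v_{k+1} ≤ (1 − p)·v_k + ((1 − p)·L̃²·D²/b)·η_k². Then there is an absolute constant C > 0 (independent of all parameters and sequences) such that a_K ≤ C·( (a₀/p)·exp(−K·p/4)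 + ( 1 + (L̃/L)·sqrt( (1−p)/(p·b) ) )·L·D²/K ). -/
/-!
The Lyapunov function `a + M v` absorbs the variance term: since `M p / 2 = α / L` and every step
size is at most `p / 2`, the contraction `1 - p` of `v` pays both for the term `(α / L) v` in the
recursion for `a` and for the slower target rate `1 - η`. What remains is the scalar recursion
`r (k + 1) ≤ (1 - η k) r k + B (η k)²`. While the step size is constant, it contracts `r`
geometrically to the noise floor `B p / 2`; afterwards, the steps `2 / (w + j)` preserve the
invariant `r ≤ E + 4 B / (w + j)`, where `E` is what is left of the initial error.
-/

section Recursion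

variable {r : ℕ → ℝ} {B : ℝ}

lemma le_pow_mul_add_of_const_step {q : ℝ} {N : ℕ} (hq0 : 0 ≤ q) (hq1 : q ≤ 1) (hB : 0 ≤ B)
    (h : ∀ k < N, r (k + 1) ≤ (1 - q) * r k + B * q ^ 2) :
    r N ≤ (1 - q) ^ N * r 0 + B * q := by
  induction N with
  | zero => simpa using mul_nonneg hB hq0
  | succ N ih =>
    have ih' := ih fun k hk => h k (hk.trans N.lt_succ_self)
    calc r (N + 1) ≤ (1 - q) * r N + B * q ^ 2 := h N N.lt_succ_self
      _ ≤ (1 - q) * ((1 - q) ^ N * r 0 + B * q) + B * q ^ 2 := by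
        gcongr
      _ = (1 - q) ^ (N + 1) * r 0 + B * q := by ring

lemma one_sub_pow_le_exp_neg {q : ℝ} (hq : q ≤ 1) (N : ℕ) :
    (1 - q) ^ N ≤ Real.exp (-(N * q)) :=
  calc (1 - q) ^ N ≤ Real.exp (-q) ^ N :=
        pow_le_pow_left₀ (sub_nonneg.mpr hq) (Real.one_sub_le_exp_neg q) N
    _ = Real.exp (-(N * q)) := by rw [← Real.exp_nat_mul, mul_neg]

lemma le_mul_exp_add_of_const_step {q : ℝ} {N : ℕ} (hq0 : 0 ≤ q) (hq1 : q ≤ 1) (hB : 0 ≤ B)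
    (hr : 0 ≤ r 0) (h : ∀ k < N, r (k + 1) ≤ (1 - q) * r k + B * q ^ 2) {t : ℝ} (ht : t ≤ N) :
    r N ≤ r 0 * Real.exp (-(t * q)) + B * q :=
  calc r N ≤ (1 - q) ^ N * r 0 + B * q := le_pow_mul_add_of_const_step hq0 hq1 hB h
    _ ≤ Real.exp (-(N * q)) * r 0 + B * q := by
      gcongr
      exact one_sub_pow_le_exp_neg hq1 N
    _ ≤ Real.exp (-(t * q)) * r 0 + B * q := by gcongr
    _ = r 0 * Real.exp (-(t * q)) + B * q := by rw [mul_comm (r 0)]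

lemma one_sub_two_div_mul_add_sq_le {x : ℝ} (hB : 0 ≤ B) (hx : 0 < x) :
    (1 - 2 / x) * (4 * B / x) + B * (2 / x) ^ 2 ≤ 4 * B / (x + 1) := by
  have gap : 4 * B / (x + 1) - ((1 - 2 / x) * (4 * B / x) + B * (2 / x) ^ 2)
      = 4 * B / (x ^ 2 * (x + 1)) := by
    field_simp
    ring
  exact sub_nonneg.mp (gap ▸ by positivity)

lemma le_add_div_of_decreasing_step {E w : ℝ} {N : ℕ} (hB : 0 ≤ B) (hE : 0 ≤ E) (hw : 2 ≤ w)
    (h0 : r 0 ≤ E + 4 * B / w)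
    (h : ∀ j < N, r (j + 1) ≤ (1 - 2 / (w + j)) * r j + B * (2 / (w + j)) ^ 2) :
    r N ≤ E + 4 * B / (w + N) := by
  induction N with
  | zero => simpa using h0
  | succ N ih =>
    have ih' := ih fun j hj => h j (hj.trans N.lt_succ_self)
    have hx2 : 2 ≤ w + N := le_add_of_le_of_nonneg hw N.cast_nonneg
    have hx0 : 0 < w + N := two_pos.trans_le hx2
    have hcontr : 0 ≤ 1 - 2 / (w + N) := sub_nonneg.mpr ((div_le_one hx0).mpr hx2)
    have hE' : (1 - 2 / (w + N)) * E ≤ E :=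
      mul_le_of_le_one_left hE (sub_le_self _ (by positivity))
    calc r (N + 1) ≤ (1 - 2 / (w + N)) * r N + B * (2 / (w + N)) ^ 2 := h N N.lt_succ_self
      _ ≤ (1 - 2 / (w + N)) * (E + 4 * B / (w + N)) + B * (2 / (w + N)) ^ 2 := by gcongr
      _ = (1 - 2 / (w + N)) * E
          + ((1 - 2 / (w + N)) * (4 * B / (w + N)) + B * (2 / (w + N)) ^ 2) := by ring
      _ ≤ E + 4 * B / (w + N + 1) :=
        add_le_add hE' (one_sub_two_div_mul_add_sq_le hB hx0)
      _ = E + 4 * B / (w + ↑(N + 1)) := by rw [Nat.cast_succ, add_assoc]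

end Recursion

/-- The step sizes `η_k` of the paper for a run of `K` iterations: constant `p / 2`, and, when
`K > 2 / p`, decaying harmonically from iteration `k₀ = ⌈K / 2⌉` on. -/
noncomputable def twoPhaseStep (p : ℝ) (K k : ℕ) : ℝ :=
  if (K : ℝ) ≤ 2 / p then p / 2
  else if k < ⌈(K : ℝ) / 2⌉₊ then p / 2
  else 2 / (4 / p + (k : ℝ) - (⌈(K : ℝ) / 2⌉₊ : ℝ))

section TwoPhaseStep

variable {p : ℝ} {K : ℕ}

lemma twoPhaseStep_of_le (hK : (K : ℝ) ≤ 2 / p) (k : ℕ) : twoPhaseStep p K k = p / 2 :=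
  if_pos hK

lemma twoPhaseStep_of_lt_ceil {k : ℕ} (hk : k < ⌈(K : ℝ) / 2⌉₊) : twoPhaseStep p K k = p / 2 := by
  simp only [twoPhaseStep, if_pos hk, ite_self]

lemma twoPhaseStep_ceil_add (hK : 2 / p < K) (j : ℕ) :
    twoPhaseStep p K (⌈(K : ℝ) / 2⌉₊ + j) = 2 / (4 / p + j) := by
  rw [twoPhaseStep, if_neg hK.not_ge, if_neg (Nat.le_add_right _ j).not_gt, Nat.cast_add]
  congr 1
  ring

lemma twoPhaseStep_le (hp : 0 < p) (k : ℕ) : twoPhaseStep p K k ≤ p / 2 := by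
  rcases le_or_gt (K : ℝ) (2 / p) with hK | hK
  · exact (twoPhaseStep_of_le hK k).le
  rcases lt_or_ge k ⌈(K : ℝ) / 2⌉₊ with hk | hk
  · exact (twoPhaseStep_of_lt_ceil hk).le
  obtain ⟨j, rfl⟩ := Nat.exists_eq_add_of_le hk
  calc twoPhaseStep p K (⌈(K : ℝ) / 2⌉₊ + j) = 2 / (4 / p + j) := twoPhaseStep_ceil_add hK j
    _ ≤ 2 / (4 / p) := by
      gcongr
      exact le_add_of_nonneg_right j.cast_nonneg
    _ = p / 2 := by
      field_simp
      norm_num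

variable {r : ℕ → ℝ} {B : ℝ}

lemma le_mul_exp_add_div_of_twoPhaseStep_short (hp0 : 0 < p) (hp2 : p ≤ 2) (hB : 0 ≤ B)
    (hK : 1 ≤ K) (hKp : (K : ℝ) ≤ 2 / p) (hr : 0 ≤ r 0)
    (h : ∀ k < K, r (k + 1) ≤ (1 - twoPhaseStep p K k) * r k + B * twoPhaseStep p K k ^ 2) :
    r K ≤ r 0 * Real.exp (-(K : ℝ) * p / 4) + B / K := by
  have hK0 : (0 : ℝ) < K := Nat.cast_pos.mpr hK
  have hpK : p / 2 ≤ 1 / K := by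
    simpa only [one_div_div] using one_div_le_one_div_of_le hK0 hKp
  simp only [twoPhaseStep_of_le hKp] at h
  calc r K ≤ r 0 * Real.exp (-(K / 2 * (p / 2))) + B * (p / 2) :=
        le_mul_exp_add_of_const_step (by positivity) (by linarith) hB hr h (half_le_self hK0.le)
    _ ≤ r 0 * Real.exp (-(K / 2 * (p / 2))) + B * (1 / K) := by gcongr
    _ = r 0 * Real.exp (-(K : ℝ) * p / 4) + B / K := by ring_nf

lemma ceil_half_le (K : ℕ) : ⌈(K : ℝ) / 2⌉₊ ≤ K :=
  Nat.ceil_le.mpr (half_le_self K.cast_nonneg)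

lemma le_mul_exp_add_of_twoPhaseStep_ceil (hp0 : 0 ≤ p) (hp2 : p ≤ 2) (hB : 0 ≤ B) (hr : 0 ≤ r 0)
    (h : ∀ k < K, r (k + 1) ≤ (1 - twoPhaseStep p K k) * r k + B * twoPhaseStep p K k ^ 2) :
    r ⌈(K : ℝ) / 2⌉₊ ≤ r 0 * Real.exp (-(K : ℝ) * p / 4) + B * (p / 2) := by
  have hconst : ∀ k < ⌈(K : ℝ) / 2⌉₊, r (k + 1) ≤ (1 - p / 2) * r k + B * (p / 2) ^ 2 :=
    fun k hk => by simpa only [twoPhaseStep_of_lt_ceil hk] using h k (hk.trans_le (ceil_half_le K))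
  calc r ⌈(K : ℝ) / 2⌉₊ ≤ r 0 * Real.exp (-(K / 2 * (p / 2))) + B * (p / 2) :=
        le_mul_exp_add_of_const_step (by positivity) (by linarith) hB hr hconst (Nat.le_ceil _)
    _ = r 0 * Real.exp (-(K : ℝ) * p / 4) + B * (p / 2) := by ring_nf

lemma le_mul_exp_add_div_of_twoPhaseStep_long (hp0 : 0 < p) (hp2 : p ≤ 2) (hB : 0 ≤ B)
    (hKp : 2 / p < K) (hr : 0 ≤ r 0)
    (h : ∀ k < K, r (k + 1) ≤ (1 - twoPhaseStep p K k) * r k + B * twoPhaseStep p K k ^ 2) :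
    r K ≤ r 0 * Real.exp (-(K : ℝ) * p / 4) + 8 * B / K := by
  set k₀ := ⌈(K : ℝ) / 2⌉₊ with hk₀
  set E := r 0 * Real.exp (-(K : ℝ) * p / 4)
  have hE : 0 ≤ E := mul_nonneg hr (Real.exp_pos _).le
  have hK0 : (0 : ℝ) < K := (div_pos two_pos hp0).trans hKp
  have hk₀K : k₀ ≤ K := ceil_half_le K
  have hk₀_lt : (k₀ : ℝ) < K / 2 + 1 := Nat.ceil_lt_add_one (by positivity)
  have hw : 2 ≤ 4 / p := by
    rw [le_div_iff₀ hp0]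
    linarith
  have hstart : r (k₀ + 0) ≤ E + 4 * B / (4 / p) :=
    calc r k₀ ≤ E + B * (p / 2) := le_mul_exp_add_of_twoPhaseStep_ceil hp0.le hp2 hB hr h
      _ ≤ E + B * p := by
        gcongr
        exact half_le_self hp0.le
      _ = E + 4 * B / (4 / p) := by field_simp
  have phase_two : r (k₀ + (K - k₀)) ≤ E + 4 * B / (4 / p + ↑(K - k₀)) :=
    le_add_div_of_decreasing_step (r := fun j => r (k₀ + j)) hB hE hw hstart
      fun j hj => by
        simpa only [hk₀, twoPhaseStep_ceil_add hKp, add_assoc] using h (k₀ + j) (by omega)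
  rw [Nat.add_sub_cancel' hk₀K, Nat.cast_sub hk₀K] at phase_two
  calc r K ≤ E + 4 * B / (4 / p + (K - k₀)) := phase_two
    _ ≤ E + 4 * B / (K / 2) := by
      gcongr
      linarith
    _ = E + 8 * B / K := by ring

theorem le_mul_exp_add_div_of_twoPhaseStep (hp0 : 0 < p) (hp2 : p ≤ 2) (hB : 0 ≤ B)
    (hK : 1 ≤ K) (hr : 0 ≤ r 0)
    (h : ∀ k < K, r (k + 1) ≤ (1 - twoPhaseStep p K k) * r k + B * twoPhaseStep p K k ^ 2) :
    r K ≤ r 0 * Real.exp (-(K : ℝ) * p / 4) + 8 * B / K := by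
  rcases le_or_gt (K : ℝ) (2 / p) with hKp | hKp
  · refine (le_mul_exp_add_div_of_twoPhaseStep_short hp0 hp2 hB hK hKp hr h).trans ?_
    gcongr
    linarith
  · exact le_mul_exp_add_div_of_twoPhaseStep_long hp0 hp2 hB hKp hr h

end TwoPhaseStep

lemma lyapunov_step {a a' v v' η p c A V M : ℝ} (hM : 0 ≤ M) (hv : 0 ≤ v)
    (hc : c ≤ M * (p - η))
    (ha' : a' ≤ (1 - η) * a + c * v + A * η ^ 2) (hv' : v' ≤ (1 - p) * v + V * η ^ 2) :
    a' + M * v' ≤ (1 - η) * (a + M * v) + (A + M * V) * η ^ 2 :=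
  calc a' + M * v'
      ≤ ((1 - η) * a + c * v + A * η ^ 2) + M * ((1 - p) * v + V * η ^ 2) := by gcongr
    _ ≤ ((1 - η) * a + M * (p - η) * v + A * η ^ 2) + M * ((1 - p) * v + V * η ^ 2) := by gcongr
    _ = (1 - η) * (a + M * v) + (A + M * V) * η ^ 2 := by ring

/-- The parameter `α` of the paper, which fixes the weight `2 α / (p L)` of the gradient-estimation
error in the Lyapunov function. -/
noncomputable def sarahAlpha (p b L Lt : ℝ) : ℝ :=
  Real.sqrt (p * b) * L / (Real.sqrt (1 - p) * Lt)

section SarahAlpha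

variable {p b L Lt : ℝ}

lemma sarahAlpha_pos (hp : p ∈ Set.Ioo (0 : ℝ) 1) (hb : 0 < b) (hL : 0 < L) (hLt : 0 < Lt) :
    0 < sarahAlpha p b L Lt := by
  have hp0 := hp.1
  have hp1 : 0 < 1 - p := sub_pos.mpr hp.2
  unfold sarahAlpha
  positivity

lemma inv_sarahAlpha (hp : p ≤ 1) :
    (sarahAlpha p b L Lt)⁻¹ = Lt / L * Real.sqrt ((1 - p) / (p * b)) := by
  rw [sarahAlpha, Real.sqrt_div (sub_nonneg.mpr hp), inv_div]
  ring

-- `α` is the value for which the Lyapunov-weighted noise of `v` matches the noise `L / α` of `a`.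
lemma sarahAlpha_div_mul_eq_div_sarahAlpha (hp : p ∈ Set.Ioo (0 : ℝ) 1) (hb : 0 < b) (hL : 0 < L)
    (hLt : 0 < Lt) :
    sarahAlpha p b L Lt / (p * L) * ((1 - p) * Lt ^ 2 / b) = L / sarahAlpha p b L Lt := by
  have hp0 := hp.1
  have hp1 : 0 < 1 - p := sub_pos.mpr hp.2
  have hsq : sarahAlpha p b L Lt ^ 2 = p * b * L ^ 2 / ((1 - p) * Lt ^ 2) := by
    rw [sarahAlpha, div_pow, mul_pow, mul_pow, Real.sq_sqrt (by positivity), Real.sq_sqrt hp1.le]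
  rw [eq_div_iff (sarahAlpha_pos hp hb hL hLt).ne']
  calc sarahAlpha p b L Lt / (p * L) * ((1 - p) * Lt ^ 2 / b) * sarahAlpha p b L Lt
      = sarahAlpha p b L Lt ^ 2 * ((1 - p) * Lt ^ 2) / (p * L * b) := by ring
    _ = L := by
      rw [hsq]
      field_simp

end SarahAlpha

theorem sarah_fw_convex_rate_general {L Lt D p b : ℝ} {K : ℕ} {α M : ℝ} {η a v : ℕ → ℝ}
    (hL : 0 < L) (hLt : 0 < Lt) (hp : p ∈ Set.Ioo (0 : ℝ) 1) (hb : 0 < b) (hK : 1 ≤ K)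
    (hα : α = sarahAlpha p b L Lt) (hM : M = 2 * α / (p * L))
    (hη : ∀ k < K, η k = twoPhaseStep p K k) (ha : 0 ≤ a 0) (hv : ∀ k, 0 ≤ v k)
    (hra : ∀ k < K, a (k + 1) ≤ (1 - η k) * a k + (α / L) * v k
      + (L / α) * D ^ 2 * η k ^ 2 + (L / 2) * D ^ 2 * η k ^ 2)
    (hrv : ∀ k < K, v (k + 1) ≤ (1 - p) * v k + ((1 - p) * Lt ^ 2 * D ^ 2 / b) * η k ^ 2) :
    a K ≤ (a 0 + M * v 0) * Real.exp (-(K : ℝ) * p / 4)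
      + 24 * ((1 + (Lt / L) * Real.sqrt ((1 - p) / (p * b))) * L * D ^ 2 / K) := by
  have hp0 : 0 < p := hp.1
  have hα0 : 0 < α := hα ▸ sarahAlpha_pos hp hb hL hLt
  have hM0 : 0 < M := hM ▸ by positivity
  have noise_eq : (L / α + L / 2) * D ^ 2 + M * ((1 - p) * Lt ^ 2 * D ^ 2 / b)
      = (1 / 2 + 3 * α⁻¹) * L * D ^ 2 := by
    have hbal : α / (p * L) * ((1 - p) * Lt ^ 2 / b) = L / α :=
      hα ▸ sarahAlpha_div_mul_eq_div_sarahAlpha hp hb hL hLt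
    rw [hM]
    linear_combination 2 * D ^ 2 * hbal
  have descent : ∀ k < K, a (k + 1) + M * v (k + 1) ≤
      (1 - twoPhaseStep p K k) * (a k + M * v k)
        + (1 / 2 + 3 * α⁻¹) * L * D ^ 2 * twoPhaseStep p K k ^ 2 := fun k hk => by
    have hc : α / L ≤ M * (p - η k) :=
      calc α / L = M * (p - p / 2) := by
            rw [hM]
            field_simp
            ring
        _ ≤ M * (p - η k) := by
            gcongr
            exact hη k hk ▸ twoPhaseStep_le hp0 k
    rw [← hη k hk, ← noise_eq]
    exact lyapunov_step hM0.le (hv k) hc ((hra k hk).trans_eq (by ring)) (hrv k hk)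
  calc a K ≤ a K + M * v K := le_add_of_nonneg_right (mul_nonneg hM0.le (hv K))
    _ ≤ (a 0 + M * v 0) * Real.exp (-(K : ℝ) * p / 4)
        + 8 * ((1 / 2 + 3 * α⁻¹) * L * D ^ 2) / K :=
      le_mul_exp_add_div_of_twoPhaseStep (r := fun k => a k + M * v k) hp0 (by linarith [hp.2])
        (by positivity) hK (add_nonneg ha (mul_nonneg hM0.le (hv 0))) descent
    _ ≤ (a 0 + M * v 0) * Real.exp (-(K : ℝ) * p / 4)
        + 8 * ((3 * (1 + α⁻¹)) * L * D ^ 2) / K := by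
      gcongr
      linarith
    _ = _ := by
      rw [← inv_sarahAlpha hp.2.le, ← hα]
      ring

/-- Theorem 1 of the paper (Sarah Frank-Wolfe, convex case) in its
deterministic expectation-sequence form. -/
theorem sarah_fw_convex_rate :
    ∃ C : ℝ, 0 < C ∧
      ∀ (L Lt D p b : ℝ) (K : ℕ) (α M : ℝ) (η a v : ℕ → ℝ),
        0 < L → L ≤ Lt → 0 < D → p ∈ Set.Ioo (0 : ℝ) 1 → 1 ≤ b → 1 ≤ K →
        α = Real.sqrt (p * b) * L / (Real.sqrt (1 - p) * Lt) →
        M = 2 * α / (p * L) →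
        (∀ k < K, η k =
          if (K : ℝ) ≤ 2 / p then p / 2
          else if k < ⌈(K : ℝ) / 2⌉₊ then p / 2
          else 2 / (4 / p + (k : ℝ) - (⌈(K : ℝ) / 2⌉₊ : ℝ))) →
        (∀ k, 0 ≤ a k) → (∀ k, 0 ≤ v k) → v 0 = 0 →
        (∀ k < K, a (k + 1) ≤ (1 - η k) * a k + (α / L) * v k
          + (L / α) * D ^ 2 * η k ^ 2 + (L / 2) * D ^ 2 * η k ^ 2) →
        (∀ k < K, v (k + 1) ≤ (1 - p) * v k
          + ((1 - p) * Lt ^ 2 * D ^ 2 / b) * η k ^ 2) →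
        a K ≤ C * ((a 0 / p) * Real.exp (-(K : ℝ) * p / 4)
          + (1 + (Lt / L) * Real.sqrt ((1 - p) / (p * b))) * L * D ^ 2 / K) := by
  refine ⟨24, by norm_num, ?_⟩
  intro L Lt D p b K α M η a v hL hLt hD hp hb hK hα hM hη ha hv hv0 hra hrv
  have rate := sarah_fw_convex_rate_general hL (hL.trans_le hLt) hp (one_pos.trans_le hb) hK hα hM
    hη (ha 0) hv hra hrv
  rw [hv0, mul_zero, add_zero] at rate
  have initial : a 0 ≤ 24 * (a 0 / p) := by
    linarith [le_div_self (ha 0) hp.1 hp.2.le, ha 0]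
  calc a K ≤ _ := rate
    _ ≤ 24 * (a 0 / p) * Real.exp (-(K : ℝ) * p / 4) + _ := by gcongr
    _ = _ := by ring
end

section
/- Let L > 0, L̃ ≥ L, D > 0, p ∈ (0,1), b ≥ 1, and K ≥ 1 an integer; set α = (L/L̃)·sqrt( p·b/(1−p) ), M = α/(p·L), and η = 1/sqrt(K). Let (a_k)_{k=0}^K, (v_k)_{k=0}^K, (G_k)_{k=0}^{K−1} be nonnegative reals with v₀ = 0 satisfying, for all 0 ≤ k < K, the two inequalities η·G_k ≤ a_k − a_{k+1} + (α/L)·v_k + (L/α)·D²·η² + (L/2)·D²·η² and v_{k+1} ≤ (1 − p)·v_k + ((1 − p)·L̃²·D²/b)·η². Then min_{0 ≤ k < K} G_k ≤ (1/K)·Σ_{k=0}^{K−1} G_k ≤ a₀/sqrt(K) + ( 1/2 + 2·(L̃/L)·sqrt( (1−p)/(p·b) ) )·L·D²/sqrt(K). -/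
/-!
Since the error `v` contracts by the factor `1 - p`, the potential `a k + M * v k` absorbs the term
`p * M * v k` of the descent inequality. With `p * M = α / L` it therefore decreases by
`η k * G k` up to a multiple of `η k ^ 2`, and telescoping leaves, besides `L / 2`, the constant
`L / α + α / (p * L) * ((1 - p) * Lt ^ 2 / b)`. The product of these two terms does not depend on
`α`, and the paper's `α` makes them equal, hence minimizes their sum.
-/

open Finset

section Average

variable {ι 𝕜 : Type*} [Field 𝕜] [LinearOrder 𝕜] [IsStrictOrderedRing 𝕜]

theorem inf'_le_one_div_card_mul_sum {s : Finset ι} (hs : s.Nonempty) (f : ι → 𝕜) :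
    s.inf' hs f ≤ 1 / (#s : 𝕜) * ∑ i ∈ s, f i := by
  rw [one_div_mul_eq_div, ← expect_eq_sum_div_card]
  exact le_expect hs fun _ hi => inf'_le f hi

end Average

theorem sum_le_potential_sub_potential_add_sum {R : Type*} [CommRing R] [PartialOrder R]
    [IsOrderedRing R] {M p : R} (hM : 0 ≤ M) {a v x A B : ℕ → R} {n : ℕ}
    (descent : ∀ k < n, x k ≤ a k - a (k + 1) + p * M * v k + A k)
    (contraction : ∀ k < n, v (k + 1) ≤ (1 - p) * v k + B k) :
    ∑ k ∈ range n, x k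
      ≤ (a 0 + M * v 0) - (a n + M * v n) + ∑ k ∈ range n, (A k + M * B k) := by
  have potential_descent : ∀ k ∈ range n,
      x k ≤ ((a k + M * v k) - (a (k + 1) + M * v (k + 1))) + (A k + M * B k) := by
    intro k hk
    have hkn := mem_range.mp hk
    have weighted_contraction := mul_le_mul_of_nonneg_left (contraction k hkn) hM
    calc
      x k ≤ a k - a (k + 1) + p * M * v k + A k := descent k hkn
      _ = (a k + M * v k) - (a (k + 1) + M * ((1 - p) * v k + B k)) + (A k + M * B k) := by ring
      _ ≤ _ := by gcongr
  calc
    ∑ k ∈ range n, x k ≤ _ := sum_le_sum potential_descent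
    _ = _ := by rw [sum_add_distrib, sum_range_sub' fun k => a k + M * v k]

theorem sum_stepSize_mul_gap_le {𝕜 : Type*} [Field 𝕜] [LinearOrder 𝕜] [IsStrictOrderedRing 𝕜]
    {L Lt D p b α : 𝕜} (hL : 0 ≤ L) (hp : 0 < p) (hα : 0 ≤ α) {η a v G : ℕ → 𝕜} {n : ℕ}
    (descent : ∀ k < n, η k * G k ≤ a k - a (k + 1) + (α / L) * v k
      + (L / α) * D ^ 2 * η k ^ 2 + (L / 2) * D ^ 2 * η k ^ 2)
    (contraction : ∀ k < n, v (k + 1) ≤ (1 - p) * v k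
      + ((1 - p) * Lt ^ 2 * D ^ 2 / b) * η k ^ 2) :
    ∑ k ∈ range n, η k * G k
      ≤ (a 0 + α / (p * L) * v 0) - (a n + α / (p * L) * v n)
        + (L / 2 + (L / α + α / (p * L) * ((1 - p) * Lt ^ 2 / b))) * D ^ 2
          * ∑ k ∈ range n, η k ^ 2 := by
  have error_weight : p * (α / (p * L)) = α / L := by
    rw [← mul_div_assoc, mul_div_mul_left _ _ hp.ne']
  have potential_bound := sum_le_potential_sub_potential_add_sum (M := α / (p * L))
    (x := fun k => η k * G k)
    (A := fun k => (L / α) * D ^ 2 * η k ^ 2 + (L / 2) * D ^ 2 * η k ^ 2)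
    (by positivity) (by simpa only [error_weight, ← add_assoc] using descent) contraction
  refine potential_bound.trans_eq ?_
  rw [mul_sum]
  congr! 2
  ring

section BalancedWeight

/-- The paper's parameter `α`: the weight for which the two error terms `L / α` and
`α / (p * L) * ((1 - p) * Lt ^ 2 / b)` of the potential argument agree. -/
noncomputable def balancedWeight (L Lt p b : ℝ) : ℝ :=
  L / Lt * √(p * b / (1 - p))

variable {L Lt p b : ℝ}

theorem balancedWeight_pos (hL : 0 < L) (hLt : 0 < Lt) (hp : p ∈ Set.Ioo (0 : ℝ) 1) (hb : 0 < b) :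
    0 < balancedWeight L Lt p b :=
  mul_pos (div_pos hL hLt) <|
    Real.sqrt_pos.mpr <| div_pos (mul_pos hp.1 hb) (sub_pos.mpr hp.2)

theorem balancedWeight_eq_div (L Lt p b : ℝ) :
    balancedWeight L Lt p b = L / (Lt * √((1 - p) / (p * b))) := by
  rw [balancedWeight, ← inv_div (1 - p), Real.sqrt_inv, ← div_eq_mul_inv, div_div]

theorem div_balancedWeight (hL : L ≠ 0) :
    L / balancedWeight L Lt p b = Lt * √((1 - p) / (p * b)) := by
  rw [balancedWeight_eq_div, div_div_cancel₀ hL]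

theorem balancedWeight_div_mul_mul (hL : L ≠ 0) :
    balancedWeight L Lt p b / (p * L) * ((1 - p) * Lt ^ 2 / b)
      = Lt * √((1 - p) / (p * b)) := by
  set r := (1 - p) / (p * b) with hr
  calc
    balancedWeight L Lt p b / (p * L) * ((1 - p) * Lt ^ 2 / b)
        = L / L * (Lt ^ 2 / Lt) * (r / √r) := by
      rw [balancedWeight_eq_div, ← hr]
      simp only [hr, div_eq_mul_inv, mul_inv]
      ring
    _ = Lt * √r := by rw [div_self hL, one_mul, sq, mul_self_div_self, Real.div_sqrt]

theorem sum_stepSize_mul_gap_le_of_balancedWeight {D α : ℝ} (hL : 0 < L) (hLt : 0 < Lt)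
    (hp : p ∈ Set.Ioo (0 : ℝ) 1) (hb : 0 < b) (hα : α = balancedWeight L Lt p b)
    {η a v G : ℕ → ℝ} {n : ℕ}
    (descent : ∀ k < n, η k * G k ≤ a k - a (k + 1) + (α / L) * v k
      + (L / α) * D ^ 2 * η k ^ 2 + (L / 2) * D ^ 2 * η k ^ 2)
    (contraction : ∀ k < n, v (k + 1) ≤ (1 - p) * v k
      + ((1 - p) * Lt ^ 2 * D ^ 2 / b) * η k ^ 2) :
    ∑ k ∈ range n, η k * G k
      ≤ (a 0 + α / (p * L) * v 0) - (a n + α / (p * L) * v n)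
        + (1 / 2 + 2 * (Lt / L) * √((1 - p) / (p * b))) * L * D ^ 2
          * ∑ k ∈ range n, η k ^ 2 := by
  have constant_eq : L / 2 + (L / α + α / (p * L) * ((1 - p) * Lt ^ 2 / b))
      = (1 / 2 + 2 * (Lt / L) * √((1 - p) / (p * b))) * L := by
    rw [hα, div_balancedWeight hL.ne', balancedWeight_div_mul_mul hL.ne']
    field_simp
    ring
  have hα0 : 0 < α := hα ▸ balancedWeight_pos hL hLt hp hb
  rw [← constant_eq]
  exact sum_stepSize_mul_gap_le hL.le hp.1 hα0.le descent contraction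

end BalancedWeight

theorem sarah_fw_nonconvex_rate_general {L Lt D p b : ℝ} {K : ℕ}
    (hL : 0 < L) (hLt : 0 < Lt) (hp : p ∈ Set.Ioo (0 : ℝ) 1) (hb : 0 < b) (hK : 1 ≤ K)
    {α η : ℝ} (hα : α = balancedWeight L Lt p b) (hη : η = 1 / √K)
    {a v G : ℕ → ℝ} (ha : 0 ≤ a K) (hv : 0 ≤ v K)
    (hrec1 : ∀ k < K, η * G k ≤ a k - a (k + 1) + (α / L) * v k
      + (L / α) * D ^ 2 * η ^ 2 + (L / 2) * D ^ 2 * η ^ 2)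
    (hrec2 : ∀ k < K, v (k + 1) ≤ (1 - p) * v k
      + ((1 - p) * Lt ^ 2 * D ^ 2 / b) * η ^ 2) :
    (range K).inf' (nonempty_range_iff.mpr (Nat.one_le_iff_ne_zero.mp hK)) G
      ≤ 1 / (K : ℝ) * ∑ k ∈ range K, G k ∧
    1 / (K : ℝ) * ∑ k ∈ range K, G k
      ≤ (a 0 + α / (p * L) * v 0) / √K
        + (1 / 2 + 2 * (Lt / L) * √((1 - p) / (p * b))) * L * D ^ 2 / √K := by
  have sum_sq_stepSize : ∑ _k ∈ range K, η ^ 2 = 1 := by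
    have : (K : ℝ) ≠ 0 := by positivity
    simp [hη, this]
  have final_potential_nonneg : 0 ≤ a K + α / (p * L) * v K := by
    have hα0 : 0 ≤ α := (hα ▸ balancedWeight_pos hL hLt hp hb).le
    have hp0 := hp.1
    positivity
  have sum_bound : η * ∑ k ∈ range K, G k ≤ (a 0 + α / (p * L) * v 0)
      + (1 / 2 + 2 * (Lt / L) * √((1 - p) / (p * b))) * L * D ^ 2 := by
    have h := sum_stepSize_mul_gap_le_of_balancedWeight (η := fun _ => η) hL hLt hp hb hα
      hrec1 hrec2
    rw [← mul_sum, sum_sq_stepSize] at h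
    linarith
  have range_nonempty := nonempty_range_iff.mpr (Nat.one_le_iff_ne_zero.mp hK)
  refine ⟨by simpa only [card_range] using inf'_le_one_div_card_mul_sum range_nonempty G, ?_⟩
  calc
    1 / (K : ℝ) * ∑ k ∈ range K, G k = (η * ∑ k ∈ range K, G k) / √K := by
      rw [hη, mul_div_right_comm, div_div, Real.mul_self_sqrt K.cast_nonneg]
    _ ≤ _ := by rw [← add_div]; gcongr

/-- Theorem 2 of the paper (Sarah Frank-Wolfe, non-convex case) in its
deterministic expectation-sequence form, with constant step size `η = 1/√K`. -/
theorem sarah_fw_nonconvex_rate (L Lt D p b : ℝ) (K : ℕ)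
    (hL : 0 < L) (hLt : L ≤ Lt) (hD : 0 < D)
    (hp : p ∈ Set.Ioo (0 : ℝ) 1) (hb : 1 ≤ b) (hK : 1 ≤ K)
    (α M η : ℝ)
    (hα : α = (L / Lt) * Real.sqrt (p * b / (1 - p)))
    (hM : M = α / (p * L))
    (hη : η = 1 / Real.sqrt K)
    (a v G : ℕ → ℝ)
    (ha : ∀ k, 0 ≤ a k) (hv : ∀ k, 0 ≤ v k) (hG : ∀ k, 0 ≤ G k)
    (hv0 : v 0 = 0)
    (hrec1 : ∀ k < K, η * G k ≤ a k - a (k + 1) + (α / L) * v k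
      + (L / α) * D ^ 2 * η ^ 2 + (L / 2) * D ^ 2 * η ^ 2)
    (hrec2 : ∀ k < K, v (k + 1) ≤ (1 - p) * v k
      + ((1 - p) * Lt ^ 2 * D ^ 2 / b) * η ^ 2) :
    Finset.inf' (Finset.range K)
        (Finset.nonempty_range_iff.mpr (Nat.one_le_iff_ne_zero.mp hK)) G
      ≤ (1 / (K : ℝ)) * ∑ k ∈ Finset.range K, G k ∧
    (1 / (K : ℝ)) * ∑ k ∈ Finset.range K, G k
      ≤ a 0 / Real.sqrt K
        + (1 / 2 + 2 * (Lt / L) * Real.sqrt ((1 - p) / (p * b)))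
          * L * D ^ 2 / Real.sqrt K := by
  simpa only [hv0, mul_zero, add_zero] using sarah_fw_nonconvex_rate_general hL (hL.trans_le hLt) hp
    (one_pos.trans_le hb) hK hα hη (ha K) (hv K) hrec1 hrec2
end

section
/- Let L > 0, L̃ ≥ L, D > 0, n ≥ 1, and 1 ≤ b ≤ n. Set λ = b/(2n), α = b·L/(5·L̃·sqrt(n)), M₁ = 2α/(λ·L), and M₂ = 8·M₁·λ²·n/b². Let (a_k)_{k≥0}, (v_k)_{k≥0}, (w_k)_{k≥0} be sequences of nonnegative reals and (η_k)_{k≥0} a sequence with 0 ≤ η_k ≤ b/(4n), satisfying for all k: a_{k+1} ≤ (1 − η_k)·a_k + (α/L)·v_k + (L/α)·D²·η_k² + (L/2)·D²·η_k²; v_{k+1} ≤ (1 − λ)·v_k + (2·L̃²·D²/b)·η_k² + (2·λ²/b)·w_k; and w_{k+1} ≤ (1 − b/(2n))·w_k + (2·n·L̃²·D²/b)·η_k². Then the Lyapunov sequence Φ_k := a_k + M₁·v_k + M₂·w_k satisfies, for all k: Φ_{k+1} ≤ (1 − η_k)·Φ_k + L·D²·η_k²·( 1/2 + 10·L̃·sqrt(n)/(L·b)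 ). -/
/-!
The errors form a cascade `w → v → a`, and `v` and `w` contract at the common rate `λ`. Each
weight is chosen so that half of this contraction pays exactly for the coupling to the next error:
`M₁ λ / 2 = α / L` and `M₂ λ / 2 = M₁ (2 λ² / b)`. Since `η ≤ λ / 2`, the other half gives the
factor `1 - η`. For every `α > 0`, the remaining noise is `L D² η² (1 / 2 + 1 / α + 24 κ² α)` with
`κ = L̃ √n / (L b)`. Its minimizer is `α = 1 / (√24 κ)`; the nearby choice `α = 1 / (5 κ)` gives
`1 / α + 24 κ² α = (5 + 24 / 5) κ ≤ 10 κ`.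
-/

theorem lyapunov_step_of_cascade {R : Type*} [CommRing R] [LinearOrder R] [IsStrictOrderedRing R]
    {a a' v v' w w' η p q r s A V W M₁ M₂ : R}
    (hv : 0 ≤ v) (hw : 0 ≤ w) (hM₁ : 0 ≤ M₁) (hM₂ : 0 ≤ M₂)
    (hp : p ≤ M₁ * (r - η)) (hq : M₁ * q ≤ M₂ * (s - η))
    (ha' : a' ≤ (1 - η) * a + p * v + A) (hv' : v' ≤ (1 - r) * v + V + q * w)
    (hw' : w' ≤ (1 - s) * w + W) :
    a' + M₁ * v' + M₂ * w' ≤ (1 - η) * (a + M₁ * v + M₂ * w) + (A + M₁ * V + M₂ * W) :=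
  calc
    a' + M₁ * v' + M₂ * w'
      ≤ ((1 - η) * a + p * v + A) + M₁ * ((1 - r) * v + V + q * w) + M₂ * ((1 - s) * w + W) := by
        gcongr
    _ = (1 - η) * a + p * v + M₁ * (1 - r) * v + (M₁ * q) * w + M₂ * (1 - s) * w
          + (A + M₁ * V + M₂ * W) := by ring
    _ ≤ (1 - η) * a + (M₁ * (r - η)) * v + M₁ * (1 - r) * v + (M₂ * (s - η)) * w
          + M₂ * (1 - s) * w + (A + M₁ * V + M₂ * W) := by gcongr
    _ = (1 - η) * (a + M₁ * v + M₂ * w) + (A + M₁ * V + M₂ * W) := by ring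

theorem saga_sarah_fw_lyapunov_step_general {L Lt D n b lam α M₁ M₂ a a' v v' w w' η : ℝ}
    (hL : 0 < L) (hn : 0 < n) (hb : 0 < b) (hα : 0 < α)
    (hlam : lam = b / (2 * n))
    (hM₁ : M₁ = 2 * α / (lam * L))
    (hM₂ : M₂ = 8 * M₁ * lam ^ 2 * n / b ^ 2)
    (hv : 0 ≤ v) (hw : 0 ≤ w) (hη : η ≤ b / (4 * n))
    (ha' : a' ≤ (1 - η) * a + (α / L) * v
      + (L / α) * D ^ 2 * η ^ 2 + (L / 2) * D ^ 2 * η ^ 2)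
    (hv' : v' ≤ (1 - lam) * v
      + (2 * Lt ^ 2 * D ^ 2 / b) * η ^ 2 + (2 * lam ^ 2 / b) * w)
    (hw' : w' ≤ (1 - b / (2 * n)) * w + (2 * n * Lt ^ 2 * D ^ 2 / b) * η ^ 2) :
    a' + M₁ * v' + M₂ * w'
      ≤ (1 - η) * (a + M₁ * v + M₂ * w)
        + L * D ^ 2 * η ^ 2 * (1 / 2 + (1 / α + 24 * n * (Lt / (L * b)) ^ 2 * α)) := by
  have hlam_pos : 0 < lam := by rw [hlam]; positivity
  have hM₁_nonneg : 0 ≤ M₁ := by rw [hM₁]; positivity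
  have hM₂_nonneg : 0 ≤ M₂ := by rw [hM₂]; positivity
  have half_le : lam / 2 ≤ lam - η := by
    have : b / (4 * n) = lam / 2 := by rw [hlam]; ring
    linarith
  have hp : α / L ≤ M₁ * (lam - η) :=
    calc
      α / L = M₁ * (lam / 2) := by rw [hM₁]; field_simp
      _ ≤ M₁ * (lam - η) := by gcongr
  have hq : M₁ * (2 * lam ^ 2 / b) ≤ M₂ * (lam - η) :=
    calc
      M₁ * (2 * lam ^ 2 / b) = M₂ * (lam / 2) := by rw [hM₂, hlam]; field_simp; ring
      _ ≤ M₂ * (lam - η) := by gcongr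
  have noise_eq : (L / α) * D ^ 2 * η ^ 2 + (L / 2) * D ^ 2 * η ^ 2
        + M₁ * ((2 * Lt ^ 2 * D ^ 2 / b) * η ^ 2) + M₂ * ((2 * n * Lt ^ 2 * D ^ 2 / b) * η ^ 2)
      = L * D ^ 2 * η ^ 2 * (1 / 2 + (1 / α + 24 * n * (Lt / (L * b)) ^ 2 * α)) := by
    rw [hM₂, hM₁, hlam]; field_simp; ring
  rw [← hlam] at hw'
  rw [← noise_eq]
  exact lyapunov_step_of_cascade hv hw hM₁_nonneg hM₂_nonneg hp hq
    (ha'.trans_eq (add_assoc _ _ _)) hv' hw'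

theorem tuned_noise_factor_le {L Lt n b α : ℝ}
    (hL : 0 < L) (hLt : 0 < Lt) (hn : 0 < n) (hb : 0 < b)
    (hα : α = b * L / (5 * Lt * √n)) :
    1 / α + 24 * n * (Lt / (L * b)) ^ 2 * α ≤ 10 * Lt * √n / (L * b) := by
  have hα_inv : 1 / α = 5 * (Lt * √n / (L * b)) := by rw [hα]; field_simp
  have hα_mul : 24 * n * (Lt / (L * b)) ^ 2 * α = 24 / 5 * (Lt * √n / (L * b)) := by
    rw [hα]; field_simp; rw [Real.sq_sqrt hn.le]
  calc
    1 / α + 24 * n * (Lt / (L * b)) ^ 2 * α = (5 + 24 / 5) * (Lt * √n / (L * b)) := by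
      rw [hα_inv, hα_mul]; ring
    _ ≤ 10 * (Lt * √n / (L * b)) := by gcongr; norm_num
    _ = 10 * Lt * √n / (L * b) := by ring

/-- Lyapunov combination step in the proof of Theorem 3 (Saga Sarah Frank-Wolfe,
convex case): combining the three expectation recursions into a single
recursion for `Φ_k = a_k + M₁ v_k + M₂ w_k`. -/
theorem saga_sarah_fw_lyapunov_step (L Lt D n b lam α M₁ M₂ : ℝ)
    (hL : 0 < L) (hLt : L ≤ Lt) (hD : 0 < D)
    (hn : 1 ≤ n) (hb1 : 1 ≤ b) (hbn : b ≤ n)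
    (hlam : lam = b / (2 * n))
    (hα : α = b * L / (5 * Lt * Real.sqrt n))
    (hM₁ : M₁ = 2 * α / (lam * L))
    (hM₂ : M₂ = 8 * M₁ * lam ^ 2 * n / b ^ 2)
    (a v w η : ℕ → ℝ)
    (ha : ∀ k, 0 ≤ a k) (hv : ∀ k, 0 ≤ v k) (hw : ∀ k, 0 ≤ w k)
    (hηnn : ∀ k, 0 ≤ η k) (hηle : ∀ k, η k ≤ b / (4 * n))
    (hrec1 : ∀ k, a (k + 1) ≤ (1 - η k) * a k + (α / L) * v k
      + (L / α) * D ^ 2 * η k ^ 2 + (L / 2) * D ^ 2 * η k ^ 2)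
    (hrec2 : ∀ k, v (k + 1) ≤ (1 - lam) * v k
      + (2 * Lt ^ 2 * D ^ 2 / b) * η k ^ 2 + (2 * lam ^ 2 / b) * w k)
    (hrec3 : ∀ k, w (k + 1) ≤ (1 - b / (2 * n)) * w k
      + (2 * n * Lt ^ 2 * D ^ 2 / b) * η k ^ 2) :
    ∀ k, a (k + 1) + M₁ * v (k + 1) + M₂ * w (k + 1)
      ≤ (1 - η k) * (a k + M₁ * v k + M₂ * w k)
        + L * D ^ 2 * η k ^ 2 * (1 / 2 + 10 * Lt * Real.sqrt n / (L * b)) := by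
  intro k
  have hn_pos : 0 < n := by linarith
  have hb_pos : 0 < b := by linarith
  have hLt_pos : 0 < Lt := by linarith
  have hα_pos : 0 < α := by rw [hα]; positivity
  refine (saga_sarah_fw_lyapunov_step_general hL hn_pos hb_pos hα_pos hlam hM₁ hM₂
    (hv k) (hw k) (hηle k) (hrec1 k) (hrec2 k) (hrec3 k)).trans ?_
  gcongr
  exact tuned_noise_factor_le hL hLt_pos hn_pos hb_pos hα
end

section
/- Let L > 0, L̃ ≥ L, D > 0, n ≥ 1, 1 ≤ b ≤ n, and K ≥ 1 an integer; set λ = b/(2n), α = b·L/(5·L̃·sqrt(n)), M₁ = 2α/(λ·L), M₂ = 8·M₁·λ²·n/b², and k₀ = ⌈K/2⌉. Define step sizes η_k for 0 ≤ k < K by: if K ≤ 4n/b then η_k = b/(4n) for all k; if K > 4n/b then η_k = b/(4n) for k < k₀ and η_k = 2/(8n/b + k − k₀) for k₀ ≤ k < K. Let (a_k)_{k=0}^K, (v_k)_{k=0}^K, (w_k)_{k=0}^K be nonnegative reals with v₀ = w₀ = 0, satisfying for all 0 ≤ k < K: a_{k+1} ≤ (1 − η_k)·a_k + (α/L)·v_k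 + (L/α)·D²·η_k² + (L/2)·D²·η_k²; v_{k+1} ≤ (1 − λ)·v_k + (2·L̃²·D²/b)·η_k² + (2·λ²/b)·w_k; and w_{k+1} ≤ (1 − b/(2n))·w_k + (2·n·L̃²·D²/b)·η_k². Then there is an absolute constant C > 0 (independent of all parameters and sequences) such that a_K ≤ C·( (n/b)·a₀·exp(−b·K/(8n)) + ( 1 + L̃·sqrt(n)/(L·b) )·L·D²/K ). -/
/-!
Because `η k ≤ λ / 2`, half of the contraction of the two variance sequences is left over after
matching the contraction factor `1 - η k` of `a`, and the weights `M₁`, `M₂` are exactly those for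
which this half pays for the coupling terms. The Lyapunov sequence `Ψ = a + M₁ v + M₂ w` therefore
satisfies `Ψ (k + 1) ≤ (1 - η k) Ψ k + R (η k) ^ 2` with `R` of order `(L + Lt √n / b) D ^ 2`.

For such a recursion, constant steps `e` shrink `Ψ` geometrically down to the noise floor `R e`.
The steps `2 / (2 / e + j)` then start at `e` and, by the usual Frank-Wolfe induction, keep the
noise contribution below `4 R / (2 / e + j)`, which turns the floor into `O(R / K)`.
-/

section NoisyContraction

variable {u : ℕ → ℝ} {e R s A : ℝ} {m K : ℕ}

theorem le_mul_exp_neg_add_of_const_step {c : ℝ} (he : e ≤ 1) (hc : 0 ≤ c) (hu₀ : 0 ≤ u 0)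
    (h : ∀ k < m, u (k + 1) ≤ (1 - e) * u k + e * c) :
    u m ≤ u 0 * Real.exp (-(e * m)) + c := by
  have he' : 0 ≤ 1 - e := sub_nonneg.mpr he
  have hgeom : u m - c ≤ (1 - e) ^ m * (u 0 - c) :=
    le_geom (u := fun k ↦ u k - c) he' m fun k hk ↦ by linarith [h k hk]
  have hexp : (1 - e) ^ m ≤ Real.exp (-(e * m)) :=
    calc (1 - e) ^ m ≤ Real.exp (-e) ^ m := pow_le_pow_left₀ he' (Real.one_sub_le_exp_neg e) m
      _ = Real.exp (-(e * m)) := by rw [← Real.exp_nat_mul]; ring_nf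
  calc u m ≤ (1 - e) ^ m * (u 0 - c) + c := by linarith
    _ ≤ (1 - e) ^ m * u 0 + c := by gcongr; linarith
    _ ≤ Real.exp (-(e * m)) * u 0 + c := by gcongr
    _ = u 0 * Real.exp (-(e * m)) + c := by rw [mul_comm]

theorem le_add_four_mul_div_of_harmonic_step (hs : 2 ≤ s) (hR : 0 ≤ R) (hA : 0 ≤ A)
    (hu₀ : u 0 ≤ A + 4 * R / s)
    (h : ∀ j < m, u (j + 1) ≤ (1 - 2 / (s + j)) * u j + R * (2 / (s + j)) ^ 2) :
    u m ≤ A + 4 * R / (s + m) := by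
  induction m with
  | zero => simpa using hu₀
  | succ m ih =>
    obtain ⟨t, ht⟩ : ∃ t, t = s + (m : ℝ) := ⟨_, rfl⟩
    have ht₂ : 2 ≤ t := by linarith [(Nat.cast_nonneg m : (0 : ℝ) ≤ m)]
    have ht₀ : 0 < t := by linarith
    have hcontr : 0 ≤ 1 - 2 / t := sub_nonneg.mpr ((div_le_one ht₀).mpr ht₂)
    have hum := ih fun j hj ↦ h j (hj.trans m.lt_succ_self)
    have hstep := h m m.lt_succ_self
    rw [← ht] at hum hstep
    have hdecay : (t - 1) / t ^ 2 ≤ 1 / (t + 1) := by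
      rw [div_le_div_iff₀ (by positivity) (by positivity)]
      linarith
    calc u (m + 1) ≤ (1 - 2 / t) * (A + 4 * R / t) + R * (2 / t) ^ 2 := by
          refine hstep.trans ?_
          gcongr
      _ = A - 2 / t * A + 4 * R * ((t - 1) / t ^ 2) := by field_simp; ring
      _ ≤ A + 4 * R * (1 / (t + 1)) := by
          gcongr
          exact sub_le_self A (by positivity)
      _ = A + 4 * R / (s + (m + 1 : ℕ)) := by rw [ht]; push_cast; ring

theorem le_mul_exp_neg_add_div_of_const_then_harmonic_step {k₀ : ℕ} (he₀ : 0 < e) (he₁ : e ≤ 1)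
    (hR : 0 ≤ R) (hu₀ : 0 ≤ u 0)
    (hconst : ∀ k < k₀, u (k + 1) ≤ (1 - e) * u k + R * e ^ 2)
    (hharm : ∀ j < m, u (k₀ + j + 1) ≤
      (1 - 2 / (2 / e + j)) * u (k₀ + j) + R * (2 / (2 / e + j)) ^ 2) :
    u (k₀ + m) ≤ u 0 * Real.exp (-(e * k₀)) + 4 * R / (2 / e + m) := by
  have hs : 2 ≤ 2 / e := (le_div_iff₀ he₀).mpr (by linarith)
  have hfloor : u k₀ ≤ u 0 * Real.exp (-(e * k₀)) + 4 * R / (2 / e) :=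
    calc u k₀ ≤ u 0 * Real.exp (-(e * k₀)) + R * e :=
          le_mul_exp_neg_add_of_const_step he₁ (by positivity) hu₀ fun k hk ↦
            (hconst k hk).trans_eq (by ring)
      _ ≤ u 0 * Real.exp (-(e * k₀)) + 2 * (R * e) := by
          gcongr _ + ?_
          exact le_mul_of_one_le_left (by positivity) one_le_two
      _ = u 0 * Real.exp (-(e * k₀)) + 4 * R / (2 / e) := by field_simp; ring
  exact le_add_four_mul_div_of_harmonic_step (u := fun j ↦ u (k₀ + j)) hs hR (by positivity)
    hfloor hharm

/-- The step-size schedule with horizon `K`: the constant step `e`, followed from time `⌈K / 2⌉` on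
by harmonically decreasing steps starting at `e`. When `K ≤ 1 / e` the decreasing phase is skipped.
The paper's schedule is the case `e = b / (4n)`. -/
noncomputable def switchedStep (e : ℝ) (K k : ℕ) : ℝ :=
  if (K : ℝ) ≤ 1 / e then e
  else if k < ⌈(K : ℝ) / 2⌉₊ then e
  else 2 / (2 / e + (k : ℝ) - (⌈(K : ℝ) / 2⌉₊ : ℝ))

theorem switchedStep_le (he : 0 < e) (K k : ℕ) : switchedStep e K k ≤ e := by
  unfold switchedStep
  split_ifs with hK hk
  · exact le_rfl
  · exact le_rfl
  · have hk' : (⌈(K : ℝ) / 2⌉₊ : ℝ) ≤ k := by exact_mod_cast not_lt.mp hk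
    calc 2 / (2 / e + (k : ℝ) - ⌈(K : ℝ) / 2⌉₊) ≤ 2 / (2 / e) := by
          gcongr
          linarith
      _ = e := by field_simp

theorem switchedStep_div_four_mul (n b : ℝ) (K k : ℕ) :
    switchedStep (b / (4 * n)) K k =
      if (K : ℝ) ≤ 4 * n / b then b / (4 * n)
      else if k < ⌈(K : ℝ) / 2⌉₊ then b / (4 * n)
      else 2 / (8 * n / b + (k : ℝ) - (⌈(K : ℝ) / 2⌉₊ : ℝ)) := by
  rw [switchedStep, one_div_div, div_div_eq_mul_div, ← mul_assoc]
  norm_num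

theorem le_mul_exp_neg_add_div_of_switchedStep_of_le (he₀ : 0 < e) (he₁ : e ≤ 1)
    (hR : 0 ≤ R) (hu₀ : 0 ≤ u 0) (hK₀ : 1 ≤ K) (hK : (K : ℝ) ≤ 1 / e)
    (h : ∀ k < K, u (k + 1) ≤ (1 - switchedStep e K k) * u k + R * switchedStep e K k ^ 2) :
    u K ≤ u 0 * Real.exp (-(e * K / 2)) + 8 * R / K := by
  have hK' : (0 : ℝ) < K := by exact_mod_cast hK₀
  have hfloor : e ≤ 8 / K := by
    have := (le_div_iff₀ he₀).mp hK
    rw [le_div_iff₀ hK']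
    linarith
  calc u K ≤ u 0 * Real.exp (-(e * K)) + R * e :=
        le_mul_exp_neg_add_of_const_step he₁ (by positivity) hu₀ fun k hk ↦ by
          have := h k hk
          rw [switchedStep, if_pos hK] at this
          linarith
    _ ≤ u 0 * Real.exp (-(e * K / 2)) + R * (8 / K) := by
        gcongr
        exact half_le_self (by positivity)
    _ = u 0 * Real.exp (-(e * K / 2)) + 8 * R / K := by ring

theorem le_mul_exp_neg_add_div_of_switchedStep_of_lt (he₀ : 0 < e) (he₁ : e ≤ 1)
    (hR : 0 ≤ R) (hu₀ : 0 ≤ u 0) (hK : 1 / e < K)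
    (h : ∀ k < K, u (k + 1) ≤ (1 - switchedStep e K k) * u k + R * switchedStep e K k ^ 2) :
    u K ≤ u 0 * Real.exp (-(e * K / 2)) + 8 * R / K := by
  have hK' : (0 : ℝ) < K := lt_trans (by positivity) hK
  obtain ⟨k₀, hk₀⟩ : ∃ k₀, k₀ = ⌈(K : ℝ) / 2⌉₊ := ⟨_, rfl⟩
  have hk₀_ge : (K : ℝ) / 2 ≤ k₀ := hk₀ ▸ Nat.le_ceil _
  have hk₀_lt : (k₀ : ℝ) < K / 2 + 1 := hk₀ ▸ Nat.ceil_lt_add_one (by positivity)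
  obtain ⟨m, hm⟩ : ∃ m, K = k₀ + m :=
    Nat.exists_eq_add_of_le (hk₀ ▸ Nat.ceil_le.mpr (half_le_self hK'.le))
  have hstep_const : ∀ k < k₀, switchedStep e K k = e := fun k hk ↦ by
    rw [switchedStep, if_neg hK.not_ge, if_pos (hk₀ ▸ hk)]
  have hstep_harm (j : ℕ) : switchedStep e K (k₀ + j) = 2 / (2 / e + j) := by
    rw [switchedStep, if_neg hK.not_ge, ← hk₀, if_neg (by omega)]
    push_cast
    ring_nf
  have hKm : (K : ℝ) ≤ 2 * (2 / e + m) := by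
    have : (K : ℝ) = k₀ + m := by exact_mod_cast hm
    have : 1 ≤ 1 / e := (one_le_div he₀).mpr he₁
    linarith [mul_one_div 2 e]
  calc u K ≤ u 0 * Real.exp (-(e * k₀)) + 4 * R / (2 / e + m) := by
        rw [hm]
        exact le_mul_exp_neg_add_div_of_const_then_harmonic_step he₀ he₁ hR hu₀
          (fun k hk ↦ hstep_const k hk ▸ h k (by omega))
          (fun j hj ↦ hstep_harm j ▸ h (k₀ + j) (by omega))
    _ ≤ u 0 * Real.exp (-(e * (K / 2))) + 4 * R / (2 / e + m) := by gcongr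
    _ = u 0 * Real.exp (-(e * K / 2)) + 8 * R / (2 * (2 / e + m)) := by field_simp; ring
    _ ≤ u 0 * Real.exp (-(e * K / 2)) + 8 * R / K := by gcongr

theorem le_mul_exp_neg_add_div_of_switchedStep (he₀ : 0 < e) (he₁ : e ≤ 1) (hR : 0 ≤ R)
    (hu₀ : 0 ≤ u 0) (hK : 1 ≤ K)
    (h : ∀ k < K, u (k + 1) ≤ (1 - switchedStep e K k) * u k + R * switchedStep e K k ^ 2) :
    u K ≤ u 0 * Real.exp (-(e * K / 2)) + 8 * R / K := by
  rcases le_or_gt (K : ℝ) (1 / e) with hle | hlt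
  · exact le_mul_exp_neg_add_div_of_switchedStep_of_le he₀ he₁ hR hu₀ hK hle h
  · exact le_mul_exp_neg_add_div_of_switchedStep_of_lt he₀ he₁ hR hu₀ hlt h

end NoisyContraction

theorem lyapunov_step_le {a v w a' v' w' η ξ lam mu p q r s t M₁ M₂ : ℝ}
    (hM₁ : 0 ≤ M₁) (hM₂ : 0 ≤ M₂) (hv : 0 ≤ v) (hw : 0 ≤ w)
    (hp : p ≤ M₁ * (lam - η)) (hs : M₁ * s ≤ M₂ * (mu - η))
    (ha' : a' ≤ (1 - η) * a + p * v + q * ξ)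
    (hv' : v' ≤ (1 - lam) * v + r * ξ + s * w)
    (hw' : w' ≤ (1 - mu) * w + t * ξ) :
    a' + M₁ * v' + M₂ * w' ≤
      (1 - η) * (a + M₁ * v + M₂ * w) + (q + M₁ * r + M₂ * t) * ξ := by
  have hpv : p * v ≤ M₁ * (lam - η) * v := by gcongr
  have hsw : M₁ * s * w ≤ M₂ * (mu - η) * w := by gcongr
  calc a' + M₁ * v' + M₂ * w'
      ≤ ((1 - η) * a + p * v + q * ξ) + M₁ * ((1 - lam) * v + r * ξ + s * w)
        + M₂ * ((1 - mu) * w + t * ξ) := by gcongr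
    _ ≤ (1 - η) * (a + M₁ * v + M₂ * w) + (q + M₁ * r + M₂ * t) * ξ := by linarith

section SagaSarah

variable {L Lt D n b lam α M₁ M₂ : ℝ}

theorem sagaSarah_weight_v_eq (hL : L ≠ 0) (hb : b ≠ 0) (hn : 0 < n)
    (hlam : lam = b / (2 * n)) (hα : α = b * L / (5 * Lt * √n)) (hM₁ : M₁ = 2 * α / (lam * L)) :
    M₁ = 4 * √n / (5 * Lt) := by
  obtain ⟨r, hr, rfl⟩ : ∃ r, 0 < r ∧ n = r ^ 2 :=
    ⟨√n, Real.sqrt_pos.mpr hn, (Real.sq_sqrt hn.le).symm⟩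
  rw [Real.sqrt_sq hr.le] at hα ⊢
  rw [hM₁, hα, hlam]
  field_simp
  norm_num

theorem sagaSarah_weight_w_eq (hb : b ≠ 0) (hn : n ≠ 0)
    (hlam : lam = b / (2 * n)) (hM₂ : M₂ = 8 * M₁ * lam ^ 2 * n / b ^ 2) :
    M₂ = 2 * M₁ / n := by
  rw [hM₂, hlam]
  field_simp
  ring

theorem sagaSarah_coupling_v_eq (hL : L ≠ 0) (hlam : lam ≠ 0) (hM₁ : M₁ = 2 * α / (lam * L)) :
    α / L = M₁ * (lam / 2) := by
  rw [hM₁]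
  field_simp

theorem sagaSarah_coupling_w_eq (hb : b ≠ 0) (hn : n ≠ 0)
    (hlam : lam = b / (2 * n)) (hM₂ : M₂ = 2 * M₁ / n) :
    M₁ * (2 * lam ^ 2 / b) = M₂ * (lam / 2) := by
  rw [hM₂, hlam]
  field_simp

theorem sagaSarah_noise_le (hL : 0 < L) (hLt : 0 < Lt) (hb : 0 < b) (hn : 0 < n)
    (hα : α = b * L / (5 * Lt * √n)) (hM₁ : M₁ = 4 * √n / (5 * Lt)) (hM₂ : M₂ = 2 * M₁ / n) :
    L / α * D ^ 2 + L / 2 * D ^ 2 + M₁ * (2 * Lt ^ 2 * D ^ 2 / b)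
        + M₂ * (2 * n * Lt ^ 2 * D ^ 2 / b)
      ≤ 10 * ((1 + Lt * √n / (L * b)) * L * D ^ 2) := by
  have hαterm : L / α * D ^ 2 = 5 * (Lt * √n / b * D ^ 2) := by
    rw [hα]
    field_simp
  have hvterm : M₁ * (2 * Lt ^ 2 * D ^ 2 / b) = 8 / 5 * (Lt * √n / b * D ^ 2) := by
    rw [hM₁]
    field_simp
    ring
  have hwterm : M₂ * (2 * n * Lt ^ 2 * D ^ 2 / b) = 16 / 5 * (Lt * √n / b * D ^ 2) := by
    rw [hM₂, hM₁]
    field_simp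
    ring
  have hrhs : (1 + Lt * √n / (L * b)) * L * D ^ 2 = L * D ^ 2 + Lt * √n / b * D ^ 2 := by
    field_simp
  rw [hαterm, hvterm, hwterm, hrhs]
  have : 0 ≤ L * D ^ 2 := by positivity
  have : 0 ≤ Lt * √n / b * D ^ 2 := by positivity
  linarith

theorem sagaSarah_lyapunov_step_le {a v w a' v' w' η : ℝ}
    (hL : 0 < L) (hLt : 0 < Lt) (hb : 0 < b) (hn : 0 < n)
    (hlam : lam = b / (2 * n)) (hα : α = b * L / (5 * Lt * √n))
    (hM₁ : M₁ = 2 * α / (lam * L)) (hM₂ : M₂ = 8 * M₁ * lam ^ 2 * n / b ^ 2)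
    (hη : η ≤ lam / 2) (hv : 0 ≤ v) (hw : 0 ≤ w)
    (ha' : a' ≤ (1 - η) * a + (α / L) * v
      + (L / α) * D ^ 2 * η ^ 2 + (L / 2) * D ^ 2 * η ^ 2)
    (hv' : v' ≤ (1 - lam) * v + (2 * Lt ^ 2 * D ^ 2 / b) * η ^ 2 + (2 * lam ^ 2 / b) * w)
    (hw' : w' ≤ (1 - lam) * w + (2 * n * Lt ^ 2 * D ^ 2 / b) * η ^ 2) :
    a' + M₁ * v' + M₂ * w' ≤
      (1 - η) * (a + M₁ * v + M₂ * w)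
        + 10 * ((1 + Lt * √n / (L * b)) * L * D ^ 2) * η ^ 2 := by
  have hM₁' := sagaSarah_weight_v_eq hL.ne' hb.ne' hn hlam hα hM₁
  have hM₂' := sagaSarah_weight_w_eq hb.ne' hn.ne' hlam hM₂
  have hM₁_nonneg : 0 ≤ M₁ := by rw [hM₁']; positivity
  have hM₂_nonneg : 0 ≤ M₂ := by rw [hM₂']; positivity
  have hlam_pos : 0 < lam := by rw [hlam]; positivity
  have hhalf : lam / 2 ≤ lam - η := by linarith
  have hp : α / L ≤ M₁ * (lam - η) := by
    rw [sagaSarah_coupling_v_eq hL.ne' hlam_pos.ne' hM₁]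
    gcongr
  have hs : M₁ * (2 * lam ^ 2 / b) ≤ M₂ * (lam - η) := by
    rw [sagaSarah_coupling_w_eq hb.ne' hn.ne' hlam hM₂']
    gcongr
  have ha'' : a' ≤ (1 - η) * a + α / L * v + (L / α * D ^ 2 + L / 2 * D ^ 2) * η ^ 2 := by
    linarith
  refine (lyapunov_step_le hM₁_nonneg hM₂_nonneg hv hw hp hs ha'' hv' hw').trans ?_
  gcongr _ + ?_ * _
  exact sagaSarah_noise_le hL hLt hb hn hα hM₁' hM₂'

theorem saga_sarah_fw_convex_rate_general {K : ℕ} {η a v w : ℕ → ℝ}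
    (hL : 0 < L) (hLt : 0 < Lt) (hb : 0 < b) (hbn : b ≤ 4 * n) (hK : 1 ≤ K)
    (hlam : lam = b / (2 * n)) (hα : α = b * L / (5 * Lt * √n))
    (hM₁ : M₁ = 2 * α / (lam * L)) (hM₂ : M₂ = 8 * M₁ * lam ^ 2 * n / b ^ 2)
    (hη : ∀ k < K, η k = switchedStep (b / (4 * n)) K k)
    (ha₀ : 0 ≤ a 0) (hv : ∀ k, 0 ≤ v k) (hw : ∀ k, 0 ≤ w k)
    (ha_step : ∀ k < K, a (k + 1) ≤ (1 - η k) * a k + (α / L) * v k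
      + (L / α) * D ^ 2 * η k ^ 2 + (L / 2) * D ^ 2 * η k ^ 2)
    (hv_step : ∀ k < K, v (k + 1) ≤ (1 - lam) * v k
      + (2 * Lt ^ 2 * D ^ 2 / b) * η k ^ 2 + (2 * lam ^ 2 / b) * w k)
    (hw_step : ∀ k < K, w (k + 1) ≤ (1 - b / (2 * n)) * w k
      + (2 * n * Lt ^ 2 * D ^ 2 / b) * η k ^ 2) :
    a K ≤ (a 0 + M₁ * v 0 + M₂ * w 0) * Real.exp (-b * (K : ℝ) / (8 * n))
      + 80 * ((1 + Lt * √n / (L * b)) * L * D ^ 2 / K) := by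
  have hn : 0 < n := by linarith
  have he : 0 < b / (4 * n) := by positivity
  have hM₁_nonneg : 0 ≤ M₁ := by
    rw [hM₁, hα, hlam]
    positivity
  have hM₂_nonneg : 0 ≤ M₂ := by
    rw [hM₂]
    positivity
  have hΨ_ge (k : ℕ) : a k ≤ a k + M₁ * v k + M₂ * w k := by
    linarith [mul_nonneg hM₁_nonneg (hv k), mul_nonneg hM₂_nonneg (hw k)]
  have hhalf : b / (4 * n) = lam / 2 := by
    rw [hlam]
    ring
  have hrate := le_mul_exp_neg_add_div_of_switchedStep (u := fun k ↦ a k + M₁ * v k + M₂ * w k)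
    (R := 10 * ((1 + Lt * √n / (L * b)) * L * D ^ 2)) he
    ((div_le_one (by positivity)).mpr hbn) (by positivity) (ha₀.trans (hΨ_ge 0)) hK
    fun k hk ↦ by
      rw [← hη k hk]
      have hη_le : η k ≤ lam / 2 := by
        rw [hη k hk, ← hhalf]
        exact switchedStep_le he K k
      exact sagaSarah_lyapunov_step_le hL hLt hb hn hlam hα hM₁ hM₂ hη_le (hv k) (hw k)
        (ha_step k hk) (hv_step k hk) (hlam ▸ hw_step k hk)
  calc a K ≤ a K + M₁ * v K + M₂ * w K := hΨ_ge K
    _ ≤ _ := hrate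
    _ = _ := by ring_nf

end SagaSarah

/-- Theorem 3 of the paper (Saga Sarah Frank-Wolfe, convex case) in its
deterministic expectation-sequence form. -/
theorem saga_sarah_fw_convex_rate :
    ∃ C : ℝ, 0 < C ∧
      ∀ (L Lt D n b : ℝ) (K : ℕ) (lam α M₁ M₂ : ℝ) (η a v w : ℕ → ℝ),
        0 < L → L ≤ Lt → 0 < D → 1 ≤ n → 1 ≤ b → b ≤ n → 1 ≤ K →
        lam = b / (2 * n) →
        α = b * L / (5 * Lt * Real.sqrt n) →
        M₁ = 2 * α / (lam * L) →
        M₂ = 8 * M₁ * lam ^ 2 * n / b ^ 2 →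
        (∀ k < K, η k =
          if (K : ℝ) ≤ 4 * n / b then b / (4 * n)
          else if k < ⌈(K : ℝ) / 2⌉₊ then b / (4 * n)
          else 2 / (8 * n / b + (k : ℝ) - (⌈(K : ℝ) / 2⌉₊ : ℝ))) →
        (∀ k, 0 ≤ a k) → (∀ k, 0 ≤ v k) → (∀ k, 0 ≤ w k) →
        v 0 = 0 → w 0 = 0 →
        (∀ k < K, a (k + 1) ≤ (1 - η k) * a k + (α / L) * v k
          + (L / α) * D ^ 2 * η k ^ 2 + (L / 2) * D ^ 2 * η k ^ 2) →
        (∀ k < K, v (k + 1) ≤ (1 - lam) * v k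
          + (2 * Lt ^ 2 * D ^ 2 / b) * η k ^ 2 + (2 * lam ^ 2 / b) * w k) →
        (∀ k < K, w (k + 1) ≤ (1 - b / (2 * n)) * w k
          + (2 * n * Lt ^ 2 * D ^ 2 / b) * η k ^ 2) →
        a K ≤ C * ((n / b) * a 0 * Real.exp (-b * (K : ℝ) / (8 * n))
          + (1 + Lt * Real.sqrt n / (L * b)) * L * D ^ 2 / K) := by
  refine ⟨80, by norm_num, fun L Lt D n b K lam α M₁ M₂ η a v w hL hLt _ _ hb hbn hK hlam hα hM₁ hM₂
    hη ha hv hw hv₀ hw₀ ha_step hv_step hw_step ↦ ?_⟩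
  have hrate := saga_sarah_fw_convex_rate_general hL (hL.trans_le hLt) (by linarith) (by linarith)
    hK hlam hα hM₁ hM₂ (fun k hk ↦ (hη k hk).trans (switchedStep_div_four_mul n b K k).symm) (ha 0)
    hv hw ha_step hv_step hw_step
  have hnb : 1 ≤ 80 * (n / b) := by linarith [(one_le_div (by linarith)).mpr hbn]
  rw [hv₀, hw₀, mul_zero, mul_zero, add_zero, add_zero] at hrate
  calc a K ≤ _ := hrate
    _ ≤ 80 * (n / b) * (a 0 * Real.exp (-b * K / (8 * n))) + _ := by
        gcongr ?_ + _
        exact le_mul_of_one_le_left (mul_nonneg (ha 0) (Real.exp_nonneg _)) hnb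
    _ = _ := by ring
end
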